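/- Let n ≥ 2 be a natural number. The number of (2n−2)-tuples (τ_1, …, τ_{2n−2}) of transpositions in the symmetric group on {1,…,n} such that τ_1⋯τ_{2n−2} = id and the subgroup generated by τ_1, …, τ_{2n−2} acts transitively on {1,…,n} equals n^{n−3}·(2n−2)!; equivalently, the genus-zero Hurwitz number with no degenerate branch points and 2n−2 simple branch points equals n^{n−3}·(2n−2)!/n!. -/

import Mathlib

open Equiv

namespace Hz
open PowerSeries Finset

section alg

/-- normalized count of factorizations of a `k`-cycle with `j` extra points -/
noncomputable def gam (j k : ℕ) : ℚ :=
  (k : ℚ) ^ (k + 1) / (k.factorial : ℚ) * (((j + k : ℕ) : ℚ) ^ j / ((j + k : ℕ) : ℚ) ^ 2)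
    / (j.factorial : ℚ)

noncomputable def qs : ℕ → ℕ → ℕ → ℚ
  | 0, N, h => if N = 0 ∧ h = 0 then 1 else 0
  | r + 1, N, h => (if N = 0 then 0 else qs r (N - 1) (h + 1)) +
      ∑ p ∈ antidiagonal h, ∑ s ∈ antidiagonal N, gam s.1 p.1 * qs r s.2 p.2

lemma gam_zero (j : ℕ) : gam j 0 = 0 := by simp [gam]

lemma qs_vanish : ∀ (r N h : ℕ), 2 * N + h < r → qs r N h = 0 := by
  intro r
  induction r with
  | zero => intro N h hh; omega
  | succ r ih =>
    intro N h hh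
    rw [qs]
    have h1 : (if N = 0 then 0 else qs r (N - 1) (h + 1)) = 0 := by
      split_ifs with hN
      · rfl
      · exact ih _ _ (by omega)
    rw [h1, zero_add]
    refine Finset.sum_eq_zero fun p hp => Finset.sum_eq_zero fun s hs => ?_
    rw [HasAntidiagonal.mem_antidiagonal] at hp hs
    by_cases h0 : p.1 = 0
    · rw [h0, gam_zero, zero_mul]
    · rw [ih s.2 p.2 (by omega), mul_zero]

/-- alternating sums of small powers vanish -/
lemma alt_sum (n j : ℕ) (hj : j < n) (y : ℚ) :
    ∑ k ∈ range (n + 1), (-1 : ℚ) ^ (n - k) * (n.choose k : ℚ) * (y + k) ^ j = 0 := by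
  have h := congrFun (fwdDiff_iter_pow_eq_zero_of_lt (R := ℚ) hj) y
  rw [fwdDiff_iter_eq_sum_shift] at h
  simpa using h

section subst
variable {K : Type*} [CommRing K]

noncomputable def sb (a : K⟦X⟧) (ha : HasSubst a) : K⟦X⟧ →+* K⟦X⟧ :=
  (substAlgHom (R := K) ha).toRingHom

lemma coeff_pow_zero (a : K⟦X⟧) (h0 : constantCoeff a = 0) (d n : ℕ) (h : n < d) :
    coeff n (a ^ d) = 0 := by
  obtain ⟨b, rfl⟩ := X_dvd_iff.mpr h0
  rw [mul_pow, coeff_X_pow_mul', if_neg (by omega)]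

lemma coeff_sb (a : K⟦X⟧) (ha : HasSubst a) (h0 : constantCoeff a = 0) (f : K⟦X⟧) (n : ℕ) :
    coeff n (sb a ha f) = ∑ d ∈ range (n + 1), coeff d f * coeff n (a ^ d) := by
  have h1 : sb a ha f = f.subst a := by
    rw [← coe_substAlgHom ha]; rfl
  rw [h1, coeff_subst' ha]
  rw [finsum_eq_sum_of_support_subset (s := range (n + 1))]
  · rfl
  · intro d hd
    simp only [Function.mem_support] at hd
    by_contra hc
    apply hd
    rw [coeff_pow_zero a h0 d n (by simpa using hc), smul_zero]

lemma sb_X (a : K⟦X⟧) (ha : HasSubst a) : sb a ha X = a := substAlgHom_X ha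

lemma sb_C (a : K⟦X⟧) (ha : HasSubst a) (h0 : constantCoeff a = 0) (c : K) :
    sb a ha (C c) = C c := by
  ext n
  rw [coeff_sb a ha h0]
  rw [Finset.sum_eq_single 0]
  · simp [coeff_one, coeff_C]
  · intro b _ hb; simp [coeff_C, hb]
  · simp

/-- triangular inversion -/
lemma sb_inv (I : Ideal K) (a : K⟦X⟧) (ha : HasSubst a) (h0 : constantCoeff a = 0)
    (hu : ∀ d, IsUnit (coeff d (a ^ d))) (f : K⟦X⟧) (m : ℕ)
    (h : ∀ n < m, coeff n (sb a ha f) ∈ I) : ∀ n < m, coeff n f ∈ I := by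
  intro n
  induction n using Nat.strong_induction_on with
  | _ n ih =>
    intro hn
    have h1 := h n hn
    rw [coeff_sb a ha h0, sum_range_succ] at h1
    have h2 : ∑ d ∈ range n, coeff d f * coeff n (a ^ d) ∈ I := by
      refine Ideal.sum_mem _ fun d hd => Ideal.mul_mem_right _ _ (ih d (mem_range.mp hd) ?_)
      have := mem_range.mp hd; omega
    have h3 := (Ideal.add_mem_iff_right I h2).mp h1
    exact (Ideal.mul_unit_mem_iff_mem I (hu n)).mp h3

variable [Algebra ℚ K]

/-- the series `c X exp(-X)` -/
noncomputable def yy (c : K) : K⟦X⟧ := C c * (X * rescale (-1) (exp K))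

lemma yy_const (c : K) : constantCoeff (yy c) = 0 := by simp [yy]
lemma yy_hs (c : K) : HasSubst (yy c) := HasSubst.of_constantCoeff_zero' (yy_const c)

lemma yy_pow (c : K) (d : ℕ) : yy c ^ d = C (c ^ d) * (X ^ d * rescale (-(d : K)) (exp K)) := by
  rw [yy, mul_pow, mul_pow, ← map_pow, ← map_pow, exp_pow_eq_rescale_exp, rescale_rescale]
  congr 4; ring

lemma coeff_yy_pow (c : K) (d n : ℕ) (h : d ≤ n) :
    coeff n (yy c ^ d) = c ^ d * (-(d : K)) ^ (n - d) * algebraMap ℚ K (1 / (n - d).factorial) := by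
  rw [yy_pow, coeff_C_mul, coeff_X_pow_mul', if_pos h, coeff_rescale, coeff_exp]
  ring

end subst
end alg
end Hz

namespace Hz
open PowerSeries Finset
section alg

lemma coeff_sb_mul {K : Type*} [CommRing K] (a : K⟦X⟧) (ha : HasSubst a)
    (h0 : constantCoeff a = 0) (f g : K⟦X⟧) (n : ℕ) :
    coeff n (sb a ha f * g) = ∑ d ∈ range (n + 1), coeff d f * coeff n (a ^ d * g) := by
  simp_rw [coeff_mul, Finset.mul_sum]
  rw [Finset.sum_comm]
  refine Finset.sum_congr rfl fun p hp => ?_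
  rw [HasAntidiagonal.mem_antidiagonal] at hp
  rw [coeff_sb a ha h0, Finset.sum_mul]
  rw [← Finset.sum_subset (s₁ := range (p.1 + 1)) (s₂ := range (n + 1))]
  · exact Finset.sum_congr rfl fun d _ => by ring
  · intro x; simp only [mem_range]; omega
  · intro x _ hx
    rw [coeff_pow_zero a h0 x p.1 (by simpa using hx)]; ring

/-- `exp (c T)` -/
noncomputable def E (c : ℚ) : ℚ⟦X⟧ := rescale c (exp ℚ)

lemma E_mul (a b : ℚ) : E a * E b = E (a + b) := exp_mul_exp_eq_exp_add a b
lemma E_zero : E 0 = 1 := by ext n; simp [E, coeff_one]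
lemma E_pow (a : ℚ) (n : ℕ) : E a ^ n = E (n * a) := by
  induction n with
  | zero => simp [E_zero]
  | succ n ih => rw [pow_succ, ih, E_mul]; congr 1; push_cast; ring
lemma coeff_E (a : ℚ) (n : ℕ) : coeff n (E a) = a ^ n / n.factorial := by
  simp [E, coeff_rescale, coeff_exp]; ring

noncomputable def Z : ℚ⟦X⟧ := yy (1 : ℚ)
lemma Z_eq : Z = X * E (-1) := by simp [Z, yy, E]
lemma Z_const : constantCoeff Z = 0 := yy_const 1
lemma Z_hs : HasSubst Z := yy_hs 1
noncomputable def P2 : ℚ⟦X⟧ →+* ℚ⟦X⟧ := sb Z Z_hs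

noncomputable def gs (k : ℕ) : ℚ⟦X⟧ := mk fun N => gam N k

lemma Z_pow_mul (N k : ℕ) : Z ^ N * E (-(k : ℚ)) = X ^ N * E (-((N + k : ℕ) : ℚ)) := by
  rw [Z_eq, mul_pow, E_pow, mul_assoc, E_mul]; congr 2; push_cast; ring

lemma fact_choose (n N : ℕ) (h : N ≤ n) :
    (1 : ℚ) / (N.factorial * (n - N).factorial) = (n.choose N : ℚ) / n.factorial := by
  rw [Nat.cast_choose ℚ h]
  have := Nat.factorial_ne_zero n
  have := Nat.factorial_ne_zero N
  have := Nat.factorial_ne_zero (n - N)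
  field_simp

lemma G1 (k : ℕ) (hk : 1 ≤ k) : P2 (gs k) * E (-(k : ℚ)) =
    C ((k : ℚ) ^ k / k.factorial) * (C (1 / (k : ℚ)) - C (1 / ((k : ℚ) + 1)) * X) := by
  have hk0 : (k : ℚ) ≠ 0 := by positivity
  have hk1 : (k : ℚ) + 1 ≠ 0 := by positivity
  have hkf : (k.factorial : ℚ) ≠ 0 := by positivity
  ext n
  rw [P2, coeff_sb_mul Z Z_hs Z_const]
  have h1 : ∀ d ∈ range (n + 1), coeff d (gs k) * coeff n (Z ^ d * E (-(k : ℚ))) =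
      ((k : ℚ) ^ (k + 1) / k.factorial / n.factorial) *
      ((-1) ^ (n - d) * (n.choose d : ℚ) * ((k + d : ℚ) ^ n / (k + d : ℚ) ^ 2)) := by
    intro d hd
    have hd' : d ≤ n := by simpa [Nat.lt_succ_iff] using hd
    rw [Z_pow_mul, coeff_X_pow_mul', if_pos hd', coeff_E, gs, coeff_mk, gam]
    have e1 : ((k + d : ℚ)) ^ n = (k + d : ℚ) ^ d * (k + d : ℚ) ^ (n - d) := by
      rw [← pow_add]; congr 1; omega
    have e2 := fact_choose n d hd'
    have e3 : (-((d + k : ℕ) : ℚ)) ^ (n - d) = (-1) ^ (n - d) * (k + d : ℚ) ^ (n - d) := by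
      rw [← mul_pow]; congr 1; push_cast; ring
    rw [e1, e3]
    have e4 : ((d + k : ℕ) : ℚ) = k + d := by push_cast; ring
    rw [e4]
    calc _ = (k : ℚ) ^ (k + 1) / k.factorial * ((k + d : ℚ) ^ d / (k + d : ℚ) ^ 2) *
          ((-1) ^ (n - d) * (k + d : ℚ) ^ (n - d)) *
          (1 / ((d.factorial : ℚ) * (n - d).factorial)) := by
            field_simp
      _ = _ := by rw [e2]; ring
  rw [Finset.sum_congr rfl h1, ← Finset.mul_sum]
  rcases n with _ | _ | n
  · simp; field_simp; ring
  · simp [Finset.sum_range_succ]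
    field_simp; ring
  · have h2 : ∀ d ∈ range (n + 1 + 1 + 1), (-1 : ℚ) ^ (n + 1 + 1 - d) * ((n + 1 + 1).choose d : ℚ) *
        ((k + d : ℚ) ^ (n + 1 + 1) / (k + d : ℚ) ^ 2) =
        (-1 : ℚ) ^ (n + 1 + 1 - d) * ((n + 1 + 1).choose d : ℚ) * (k + d : ℚ) ^ n := by
      intro d _
      have : (k + d : ℚ) ≠ 0 := by positivity
      congr 1
      field_simp; ring
    rw [Finset.sum_congr rfl h2, alt_sum _ _ (by omega)]
    simp [coeff_C_mul, coeff_C, coeff_X]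

/-- the outer substituted variable -/
noncomputable def Yv : ℚ⟦X⟧⟦X⟧ := yy (E (-1))
lemma Yv_const : constantCoeff Yv = 0 := yy_const _
lemma Yv_hs : HasSubst Yv := yy_hs _
noncomputable def P1 : ℚ⟦X⟧⟦X⟧ →+* ℚ⟦X⟧⟦X⟧ := sb Yv Yv_hs
noncomputable def Ps : ℚ⟦X⟧⟦X⟧ →+* ℚ⟦X⟧⟦X⟧ := P1.comp (PowerSeries.map P2)

noncomputable def gser : ℚ⟦X⟧⟦X⟧ := mk gs

noncomputable def tgt (j : ℕ) : ℚ⟦X⟧ :=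
  if j = 0 then 0 else (if j = 1 then 1 else 0) - C (1 / ((j + 1).factorial : ℚ)) * X

lemma s1 (j : ℕ) (hj : 1 ≤ j) : ∑ k ∈ range (j + 1),
    (if k = 0 then 0 else (k : ℚ) ^ k / k.factorial * (-(k : ℚ)) ^ (j - k) / (j - k).factorial *
      (1 / (k : ℚ))) = if j = 1 then 1 else 0 := by
  split_ifs with h
  · subst h; simp [Finset.sum_range_succ]
  · have h2 : ∀ k ∈ range (j + 1), (if k = 0 then 0 else (k : ℚ) ^ k / k.factorial *
        (-(k : ℚ)) ^ (j - k) / (j - k).factorial * (1 / (k : ℚ))) =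
        1 / j.factorial * ((-1) ^ (j - k) * (j.choose k : ℚ) * ((0 : ℚ) + k) ^ (j - 1)) := by
      intro k hk
      have hk' : k ≤ j := by simpa [Nat.lt_succ_iff] using hk
      split_ifs with h0
      · subst h0
        have : j - 1 ≠ 0 := by omega
        simp [this]
      · have hk0 : (k : ℚ) ≠ 0 := by positivity
        have e2 := fact_choose j k hk'
        have e3 : (-(k : ℚ)) ^ (j - k) = (-1) ^ (j - k) * (k : ℚ) ^ (j - k) := by
          rw [← mul_pow]; congr 1; ring
        have e1 : (k : ℚ) ^ (j - 1) * k = (k : ℚ) ^ k * (k : ℚ) ^ (j - k) := by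
          rw [← pow_add, ← pow_succ]; congr 1; omega
        calc _ = ((k : ℚ) ^ k * (k : ℚ) ^ (j - k)) * (1 / (k : ℚ)) * (-1) ^ (j - k) *
              (1 / ((k.factorial : ℚ) * (j - k).factorial)) := by
                rw [e3]; field_simp
          _ = _ := by
              rw [e2, ← e1, zero_add]; field_simp
    rw [Finset.sum_congr rfl h2, ← Finset.mul_sum, alt_sum _ _ (by omega), mul_zero]

lemma s2 (j : ℕ) (hj : 1 ≤ j) : ∑ k ∈ range (j + 1),
    (if k = 0 then 0 else (k : ℚ) ^ k / k.factorial * (-(k : ℚ)) ^ (j - k) / (j - k).factorial *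
      (1 / ((k : ℚ) + 1))) = 1 / ((j + 1).factorial : ℚ) := by
  have h2 : ∀ k ∈ range (j + 1), (if k = 0 then 0 else (k : ℚ) ^ k / k.factorial *
        (-(k : ℚ)) ^ (j - k) / (j - k).factorial * (1 / ((k : ℚ) + 1))) =
        1 / (j + 1).factorial * ((-1) ^ (j + 1 - (k + 1)) * ((j + 1).choose (k + 1) : ℚ) *
          ((-1 : ℚ) + (k + 1 : ℕ)) ^ j) := by
    intro k hk
    have hk' : k ≤ j := by simpa [Nat.lt_succ_iff] using hk
    split_ifs with h0
    · subst h0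
      have : j ≠ 0 := by omega
      simp [this]
    · have hk0 : (k : ℚ) + 1 ≠ 0 := by positivity
      have e2 := fact_choose (j + 1) (k + 1) (by omega)
      have e3 : (-(k : ℚ)) ^ (j - k) = (-1) ^ (j - k) * (k : ℚ) ^ (j - k) := by
        rw [← mul_pow]; congr 1; ring
      have e1 : (k : ℚ) ^ j = (k : ℚ) ^ k * (k : ℚ) ^ (j - k) := by
        rw [← pow_add]; congr 1; omega
      have e4 : j + 1 - (k + 1) = j - k := by omega
      have e5 : ((-1 : ℚ) + (k + 1 : ℕ)) = k := by push_cast; ring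
      rw [e4, Nat.factorial_succ k] at e2
      push_cast at e2
      rw [e4, e5, e3]
      calc _ = ((k : ℚ) ^ k * (k : ℚ) ^ (j - k)) * (-1) ^ (j - k) *
              (1 / (((k : ℚ) + 1) * (k.factorial : ℚ) * (j - k).factorial)) := by
                field_simp
          _ = _ := by
              rw [e2, ← e1]; field_simp
  rw [Finset.sum_congr rfl h2, ← Finset.mul_sum]
  have h3 := alt_sum (j + 1) j (by omega) (-1)
  rw [Finset.sum_range_succ'] at h3
  have h4 : (-1 : ℚ) ^ (j + 1 - 0) * ((j + 1).choose 0 : ℚ) * (-1 + ((0 : ℕ) : ℚ)) ^ j = -1 := by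
    simp [pow_succ, ← mul_pow]
  rw [h4] at h3
  have h5 := eq_neg_of_add_eq_zero_left h3
  rw [h5]; simp

lemma G2 (j : ℕ) : coeff j (Ps gser) = tgt j := by
  have h0 : coeff j (Ps gser) = coeff j (sb Yv Yv_hs (PowerSeries.map P2 gser)) := rfl
  rw [h0, coeff_sb Yv Yv_hs Yv_const]
  have h1 : ∀ k ∈ range (j + 1), coeff k (PowerSeries.map P2 gser) * coeff j (Yv ^ k) =
      C (if k = 0 then 0 else (k : ℚ) ^ k / k.factorial * (-(k : ℚ)) ^ (j - k) / (j - k).factorial *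
      (1 / (k : ℚ))) - C (if k = 0 then 0 else (k : ℚ) ^ k / k.factorial *
        (-(k : ℚ)) ^ (j - k) / (j - k).factorial * (1 / ((k : ℚ) + 1))) * X := by
    intro k hk
    have hk' : k ≤ j := by simpa [Nat.lt_succ_iff] using hk
    rw [coeff_map, gser, coeff_mk, Yv, coeff_yy_pow _ _ _ hk', E_pow]
    rcases Nat.eq_zero_or_pos k with h0 | h0
    · subst h0
      have : gs 0 = 0 := by ext N; simp [gs, gam_zero]
      simp [this]
    · have hk0 : k ≠ 0 := by omega
      rw [if_neg hk0, if_neg hk0]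
      have e1 : (k : ℚ) * -1 = -(k : ℚ) := by ring
      rw [e1, ← mul_assoc, ← mul_assoc, G1 k h0]
      have e2 : (-(k : ℚ⟦X⟧)) ^ (j - k) = C ((-(k : ℚ)) ^ (j - k)) := by simp
      have e3 : algebraMap ℚ ℚ⟦X⟧ (1 / ((j - k).factorial : ℚ)) = C (1 / ((j - k).factorial : ℚ)) :=
        rfl
      rw [e2, e3]
      simp only [div_eq_mul_inv, map_mul, one_mul]
      ring
  rw [Finset.sum_congr rfl h1, Finset.sum_sub_distrib, ← Finset.sum_mul, ← map_sum, ← map_sum, tgt]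
  split_ifs with h h'
  · subst h; simp
  · rw [s1 j (by omega), s2 j (by omega), if_pos h']; simp
  · rw [s1 j (by omega), s2 j (by omega), if_neg h']; simp

end alg
end Hz

namespace Hz
open PowerSeries Finset
section alg

lemma P2_X : P2 X = Z := sb_X _ _
lemma P2_C (c : ℚ) : P2 (C c) = C c := sb_C _ _ Z_const c
lemma Ps_X : Ps X = Yv := by
  rw [Ps, RingHom.comp_apply, PowerSeries.map_X, P1, sb_X]
lemma Ps_C (c : ℚ⟦X⟧) : Ps (C c) = C (P2 c) := by
  rw [Ps, RingHom.comp_apply, PowerSeries.map_C, P1, sb_C _ _ Yv_const]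

noncomputable def Wser (r : ℕ) : ℚ⟦X⟧⟦X⟧ := mk fun h => mk fun N => qs r N h

lemma Wser_zero : Wser 0 = 1 := by
  ext h N
  simp only [Wser, coeff_mk, coeff_one, qs]
  by_cases h0 : h = 0 <;> by_cases hN : N = 0 <;> simp [h0, hN, coeff_one]

lemma Wser_succ (r : ℕ) : X * Wser (r + 1) =
    C X * (Wser r - C (coeff 0 (Wser r))) + X * (gser * Wser r) := by
  ext h N
  rcases h with _ | h
  · simp [coeff_zero_X_mul]
  · rw [coeff_succ_X_mul, map_add, coeff_succ_X_mul, coeff_C_mul, map_sub, coeff_C]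
    simp only [Nat.add_eq_zero_iff, one_ne_zero, and_false, if_false, sub_zero]
    rw [map_add, coeff_mul h, map_sum]
    simp only [Wser, coeff_mk, gser, qs]
    congr 1
    · rcases N with _ | N
      · simp
      · rw [coeff_succ_X_mul]; simp
    · refine Finset.sum_congr rfl fun p _ => ?_
      rw [coeff_mul]; simp [gs]

noncomputable def V (r : ℕ) : ℚ⟦X⟧⟦X⟧ := Ps (X * Wser r)

lemma Kid : C X * exp ℚ⟦X⟧ + X * Ps gser = X ^ 2 + C X * X + C X := by
  ext1 j
  rcases j with _ | j
  · simp
  · rw [map_add, coeff_succ_X_mul, G2, coeff_C_mul, coeff_exp, map_add, map_add, coeff_X_pow,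
      coeff_C_mul, coeff_X, coeff_C, tgt]
    have e3 : algebraMap ℚ ℚ⟦X⟧ (1 / ((j + 1).factorial : ℚ)) = C (1 / ((j + 1).factorial : ℚ)) :=
        rfl
    rw [e3]
    rcases j with _ | _ | j
    · simp
    · simp; ring
    · simp; ring

lemma exp_cancel : rescale (-1) (exp ℚ⟦X⟧) * exp ℚ⟦X⟧ = 1 := by
  have := exp_mul_exp_neg_eq_one (A := ℚ⟦X⟧)
  rw [mul_comm]; exact this

lemma V_rec (r : ℕ) : ∃ c : ℚ⟦X⟧, X * V (r + 1) = (X ^ 2 + C X * X + C X) * V r - X * C c := by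
  refine ⟨Z * P2 (coeff 0 (Wser r)), ?_⟩
  have h := congrArg (fun f => Ps (X * f)) (Wser_succ r)
  have h1 : Ps (X * (X * Wser (r + 1))) = Yv * V (r + 1) := by rw [map_mul, Ps_X]; rfl
  have h2 : Ps (X * (C X * (Wser r - C (coeff 0 (Wser r))) + X * (gser * Wser r))) =
    C Z * (V r - Yv * C (P2 (coeff 0 (Wser r)))) + Yv * (Ps gser * V r) := by
    have : (X * (C X * (Wser r - C (coeff 0 (Wser r))) + X * (gser * Wser r))) =
      C X * (X * Wser r - X * C (coeff 0 (Wser r))) + X * (gser * (X * Wser r)) := by ring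
    rw [this, V]
    simp only [map_add, map_mul, map_sub, Ps_X, Ps_C, P2_X]
  beta_reduce at h
  rw [h1, h2] at h
  have e1 : C (E (-1)) * C (E 1) = (1 : ℚ⟦X⟧⟦X⟧) := by
    rw [← map_mul, E_mul]; simp [E_zero]
  have e2 := exp_cancel
  rw [Yv, yy, Z_eq] at h
  rw [Z_eq]
  rw [← Kid]
  simp only [map_mul] at h ⊢
  set a := C (E (-1)) with ha
  set b := C (E 1) with hb
  set e := exp ℚ⟦X⟧
  set e' := rescale (-1) e
  set c := C (P2 (coeff 0 (Wser r)))
  have h3 := congrArg (fun f => b * e * f) h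
  beta_reduce at h3
  linear_combination h3 - (X * V (r+1) + X * a * C X * c - X * Ps gser * V r) * (a * b) * e2  - (X * V (r+1) - X * Ps gser * V r - e * C X * V r + X * a * C X * c) * e1

lemma V_zero (r : ℕ) : coeff 0 (V r) = 0 := by
  rw [V, map_mul, Ps_X]
  have := Yv_const
  rw [← coeff_zero_eq_constantCoeff_apply] at this
  rw [coeff_zero_eq_constantCoeff_apply, map_mul, Yv_const, zero_mul]

lemma V_coeff (r j : ℕ) : coeff (j + 1) (V (r + 1)) =
    coeff j (V r) + X * coeff (j + 1) (V r) + X * coeff (j + 2) (V r) := by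
  obtain ⟨c, hc⟩ := V_rec r
  have h := congrArg (coeff (j + 2)) hc
  rw [coeff_succ_X_mul] at h
  have e : (X ^ 2 + C X * X + C X) * V r - X * C c =
    X * (X * V r) + C X * (X * V r) + C X * V r - X * C c := by ring
  rw [e, map_sub, map_add, map_add, coeff_succ_X_mul, coeff_succ_X_mul, coeff_succ_X_mul,
    coeff_C_mul, coeff_C_mul, coeff_succ_X_mul, coeff_C] at h
  simpa using h

lemma V_init (j n : ℕ) : coeff n (coeff (j + 1) (V 0)) =
    (-1) ^ n / n.factorial * ((-1) ^ j / j.factorial) := by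
  have : V 0 = Yv := by rw [V, Wser_zero, mul_one, Ps_X]
  rw [this, Yv]
  have h := coeff_yy_pow (E (-1)) 1 (j + 1) (by omega)
  rw [pow_one] at h
  rw [h, pow_one]
  have e3 : algebraMap ℚ ℚ⟦X⟧ (1 / ((j + 1 - 1).factorial : ℚ)) = C (1 / (j.factorial : ℚ)) :=
        rfl
  have e2 : (-((1 : ℕ) : ℚ⟦X⟧)) ^ (j + 1 - 1) = C ((-1 : ℚ) ^ j) := by simp
  rw [e3, e2, mul_assoc, ← map_mul, mul_comm, coeff_C_mul, coeff_E]
  ring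

end alg
end Hz

namespace Hz
open Finset
section polys
open Polynomial

noncomputable def Tp (k : ℕ) : ℚ[X] := C (1 / (k.factorial : ℚ)) * X ^ k
noncomputable def Dp (k : ℕ) : ℚ[X] := C (1 / (k.factorial : ℚ)) * (X - 1) ^ k
noncomputable def Dm : ℕ → ℚ[X]
  | 0 => 0
  | k + 1 => Dp k

lemma Tp_zero : Tp 0 = 1 := by simp [Tp]
lemma Dp_zero : Dp 0 = 1 := by simp [Dp]

lemma fac_aux (k : ℕ) : (1 / ((k + 1).factorial : ℚ)) * ((k : ℚ) + 1) = 1 / (k.factorial : ℚ) := by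
  rw [Nat.factorial_succ]; push_cast; field_simp

lemma Tp_der (k : ℕ) : derivative (Tp (k + 1)) = Tp k := by
  rw [Tp, derivative_C_mul, derivative_X_pow, Tp, ← fac_aux k, C_mul]
  simp; ring
lemma Dp_der (k : ℕ) : derivative (Dp (k + 1)) = Dp k := by
  rw [Dp, derivative_C_mul, derivative_pow, Dp, ← fac_aux k, C_mul]
  simp; ring
lemma Dm_der (k : ℕ) : derivative (Dm (k + 1)) = Dm k := by
  rcases k with _ | k
  · simp [Dm, Dp_zero]
  · exact Dp_der k

noncomputable def pp (j i : ℕ) : ℚ[X] := Tp i * Dm (i + j) - Dm i * Tp (i + j)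

lemma pp_zero (i : ℕ) : pp 0 i = 0 := by simp [pp, mul_comm]

lemma pp_der_zero (j : ℕ) : derivative (pp (j + 1) 0) = pp j 0 := by
  have h : Dm 0 = 0 := rfl
  simp only [pp, Tp_zero, zero_add, h, one_mul, zero_mul, sub_zero]
  exact Dm_der j

lemma pp_der (j i : ℕ) : derivative (pp (j + 1) (i + 1)) = pp j (i + 1) + pp (j + 2) i := by
  have e1 : i + 1 + (j + 1) = (i + j + 1) + 1 := by ring
  have e2 : i + 1 + j = i + j + 1 := by ring
  have e3 : i + (j + 2) = i + j + 1 + 1 := by ring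
  simp only [pp, e1, e2, e3, derivative_sub, derivative_mul, Tp_der, Dm_der]
  ring

noncomputable def PP (j n : ℕ) : ℚ[X] := ∑ a ∈ antidiagonal n, Dp a.1 * pp j a.2

lemma PP_zero (n : ℕ) : PP 0 n = 0 := by simp [PP, pp_zero]

lemma PP_der_zero (j : ℕ) : derivative (PP (j + 1) 0) = PP j 0 := by
  simp [PP, Dp_zero, pp_der_zero]

lemma PP_der (j n : ℕ) : derivative (PP (j + 1) (n + 1)) =
    PP j (n + 1) + PP (j + 1) n + PP (j + 2) n := by
  have h1 : derivative (PP (j + 1) (n + 1)) =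
      ∑ a ∈ antidiagonal (n + 1), derivative (Dp a.1) * pp (j + 1) a.2 +
      ∑ a ∈ antidiagonal (n + 1), Dp a.1 * derivative (pp (j + 1) a.2) := by
    rw [PP, derivative_sum, ← Finset.sum_add_distrib]
    exact Finset.sum_congr rfl fun a _ => derivative_mul
  rw [h1]
  have h2 : ∑ a ∈ antidiagonal (n + 1), derivative (Dp a.1) * pp (j + 1) a.2 = PP (j + 1) n := by
    rw [Finset.Nat.sum_antidiagonal_succ]
    simp [Dp_zero, Dp_der, PP]
  have h3 : ∑ a ∈ antidiagonal (n + 1), Dp a.1 * derivative (pp (j + 1) a.2) =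
      PP j (n + 1) + PP (j + 2) n := by
    rw [Finset.Nat.sum_antidiagonal_succ', PP, Finset.Nat.sum_antidiagonal_succ', PP]
    simp only [pp_der_zero, pp_der, mul_add, Finset.sum_add_distrib]
    ring
  rw [h2, h3]; ring

lemma Tp_eval0 (i : ℕ) : (Tp i).eval 0 = if i = 0 then 1 else 0 := by
  rcases i with _ | i <;> simp [Tp]
lemma Tp_eval1 (i : ℕ) : (Tp i).eval 1 = 1 / i.factorial := by simp [Tp]
lemma Dp_eval0 (i : ℕ) : (Dp i).eval 0 = (-1) ^ i / i.factorial := by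
  simp [Dp]; ring
lemma Dp_eval1 (i : ℕ) : (Dp i).eval 1 = if i = 0 then 1 else 0 := by
  rcases i with _ | i <;> simp [Dp]
lemma Dm_eval1 (i : ℕ) : (Dm i).eval 1 = if i = 1 then 1 else 0 := by
  rcases i with _ | i <;> simp [Dm, Dp_eval1]

lemma PP_eval0 (j n : ℕ) : (PP (j + 1) n).eval 0 =
    (-1) ^ n / n.factorial * ((-1) ^ j / j.factorial) := by
  rw [PP, eval_finsetSum, Finset.sum_eq_single (n, 0)]
  · simp [pp, Tp_zero, Dm, Dp_eval0]
  · rintro ⟨a, b⟩ hab hne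
    have hb : b ≠ 0 := by
      rintro rfl
      simp at hab
      exact hne (by rw [hab])
    simp [pp, Tp_eval0, hb]
  · simp

lemma PP_eval1 (j n : ℕ) : (PP j n).eval 1 =
    (if n + j = 1 then 1 else 0) / n.factorial - (if n = 1 then 1 else 0) / (n + j).factorial := by
  rw [PP, eval_finsetSum, Finset.sum_eq_single (0, n)]
  · simp [pp, Dp_eval1, Dm_eval1, Tp_eval1]
    congr 1 <;> split_ifs <;> simp
  · rintro ⟨a, b⟩ hab hne
    have hb : a ≠ 0 := by
      rintro rfl
      simp at hab
      exact hne (by rw [hab])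
    simp [Dp_eval1, hb]
  · simp

lemma Tp_deg (k : ℕ) : (Tp k).natDegree ≤ k := by
  rw [Tp]; exact natDegree_C_mul_X_pow_le _ _
lemma Dp_deg (k : ℕ) : (Dp k).natDegree ≤ k := by
  rw [Dp]
  refine (natDegree_C_mul_le _ _).trans ((natDegree_pow_le).trans ?_)
  have : (X - 1 : ℚ[X]).natDegree = 1 := natDegree_X_sub_C 1
  rw [this]; omega
lemma Dm_deg (k : ℕ) : (Dm k).natDegree ≤ k := by
  rcases k with _ | k
  · simp [Dm]
  · exact (Dp_deg k).trans (by omega)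

lemma pp_deg (j i : ℕ) : (pp j i).natDegree ≤ 2 * i + j := by
  rw [pp]
  have h1 := Tp_deg i
  have h2 := Tp_deg (i + j)
  have h3 := Dm_deg i
  have h4 := Dm_deg (i + j)
  refine (natDegree_sub_le _ _).trans (max_le ?_ ?_)
  · refine natDegree_mul_le.trans (by omega)
  · refine natDegree_mul_le.trans (by omega)

lemma PP_deg (j n : ℕ) : (PP j n).natDegree ≤ 2 * n + j := by
  rw [PP]
  refine natDegree_sum_le_of_forall_le _ _ fun a ha => ?_
  rw [HasAntidiagonal.mem_antidiagonal] at ha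
  have h1 := Dp_deg a.1
  have h2 := pp_deg j a.2
  refine natDegree_mul_le.trans (by omega)

/-- rescaled coefficients -/
noncomputable def pv (j r n : ℕ) : ℚ := r.factorial * (PP j n).coeff r

lemma pv_der (j r n : ℕ) : pv j (r + 1) n = r.factorial * (derivative (PP j n)).coeff r := by
  rw [pv, coeff_derivative, Nat.factorial_succ]; push_cast; ring

lemma pv_sum (j n R : ℕ) (h : 2 * n + j < R) :
    ∑ r ∈ range R, 1 / (r.factorial : ℚ) * pv j r n = (PP j n).eval 1 := by
  rw [eval_eq_sum_range' (lt_of_le_of_lt (PP_deg j n) h)]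
  refine Finset.sum_congr rfl fun r _ => ?_
  have := Nat.factorial_ne_zero r
  rw [pv]; field_simp; simp

end polys
end Hz

namespace Hz
open PowerSeries Finset
section alg

lemma vv_eq : ∀ r j n : ℕ, coeff n (coeff j (V r)) = pv j r n := by
  intro r
  induction r with
  | zero =>
    intro j n
    rcases j with _ | j
    · rw [V_zero, pv, PP_zero]; simp
    · rw [V_init, pv, Polynomial.coeff_zero_eq_eval_zero, PP_eval0]; simp
  | succ r ih =>
    intro j n
    rcases j with _ | j
    · rw [V_zero, pv, PP_zero]; simp
    · rw [V_coeff, pv_der]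
      rcases n with _ | n
      · rw [PP_der_zero, ← pv, ← ih]
        simp
      · rw [PP_der, Polynomial.coeff_add, Polynomial.coeff_add, mul_add, mul_add, ← pv, ← pv, ← pv,
          ← ih, ← ih, ← ih, map_add, map_add, coeff_succ_X_mul, coeff_succ_X_mul]

lemma tgt_eq (j n : ℕ) : (PP j n).eval 1 = coeff n (tgt j) := by
  rw [tgt]
  split_ifs with h0 h1
  · subst h0; rw [PP_zero]; simp
  · subst h1; rw [PP_eval1, map_sub, coeff_C_mul, coeff_X, coeff_one]
    rcases n with _ | _ | n <;> simp
  · rw [PP_eval1, map_sub, coeff_C_mul, coeff_X, if_neg (by omega)]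
    rcases n with _ | _ | n <;> simp [add_comm]

noncomputable def Fr (R : ℕ) : ℚ⟦X⟧⟦X⟧ :=
  X * (∑ r ∈ range R, C (C (1 / (r.factorial : ℚ))) * Wser r) - gser

lemma Fr_coeff (R j n : ℕ) (h : 2 * n + j < R) : coeff n (coeff j (Ps (Fr R))) = 0 := by
  have h1 : Ps (Fr R) = ∑ r ∈ range R, C (C (1 / (r.factorial : ℚ))) * V r - Ps gser := by
    rw [Fr, map_sub, mul_sum, map_sum]
    congr 1
    refine Finset.sum_congr rfl fun r _ => ?_
    rw [mul_left_comm, map_mul, Ps_C, P2_C]; rfl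
  rw [h1, map_sub, map_sub, G2, map_sum, map_sum, ← tgt_eq, ← pv_sum j n R h, sub_eq_zero]
  refine Finset.sum_congr rfl fun r _ => ?_
  rw [coeff_C_mul, coeff_C_mul, vv_eq]

lemma unit_yy {K : Type*} [CommRing K] [Algebra ℚ K] (c : K) (hc : IsUnit c) (d : ℕ) :
    IsUnit (coeff d (yy c ^ d)) := by
  rw [coeff_yy_pow c d d le_rfl]
  simpa using hc.pow d

lemma E_unit (a : ℚ) : IsUnit (E a) := by
  refine IsUnit.of_mul_eq_one (E (-a)) ?_
  rw [E_mul]; simp [E_zero]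

lemma Fr_zero (R j n : ℕ) (h : 2 * n + j < R) : coeff n (coeff j (Fr R)) = 0 := by
  have h1 : ∀ j' < j + 1, coeff j' (PowerSeries.map P2 (Fr R)) ∈
      Ideal.span {(X : ℚ⟦X⟧) ^ (n + 1)} := by
    refine sb_inv _ Yv Yv_hs Yv_const (fun d => unit_yy _ (E_unit _) d) _ _ ?_
    intro j' hj'
    rw [Ideal.mem_span_singleton, X_pow_dvd_iff]
    intro n' hn'
    exact Fr_coeff R j' n' (by omega)
  have h2 := h1 j (by omega)
  rw [Ideal.mem_span_singleton, X_pow_dvd_iff, coeff_map] at h2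
  have h3 := sb_inv (⊥ : Ideal ℚ) Z Z_hs Z_const (fun d => unit_yy _ isUnit_one d)
    (coeff j (Fr R)) (n + 1) (fun n' hn' => by rw [Ideal.mem_bot]; exact h2 n' hn') n (by omega)
  simpa using h3

theorem alg_main (N h : ℕ) :
    ∑ r ∈ range (2 * N + h + 1), qs r N h / (r.factorial : ℚ) = gam N (h + 1) := by
  have h1 := Fr_zero (2 * N + h + 2) (h + 1) N (by omega)
  rw [Fr, map_sub, coeff_succ_X_mul, map_sub, map_sum, map_sum, sub_eq_zero,
    Finset.sum_range_succ] at h1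
  simp only [coeff_C_mul, Wser, coeff_mk, gser, gs] at h1
  rw [qs_vanish _ N h (by omega), mul_zero, add_zero] at h1
  rw [← h1]
  refine Finset.sum_congr rfl fun r _ => by ring

end alg
end Hz

namespace Hz
set_option linter.unusedSectionVars false
open Finset
section comb
variable {α : Type*}

/-- block equivalence relation -/
def bl (A : Finset α) : Setoid α where
  r x y := x = y ∨ (x ∈ A ∧ y ∈ A)
  iseqv := by
    refine ⟨fun x => Or.inl rfl, ?_, ?_⟩
    · rintro x y (h | h)
      · exact Or.inl h.symm
      · exact Or.inr h.symm
    · rintro x y z (rfl | h) (rfl | h')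
      · exact Or.inl rfl
      · exact Or.inr h'
      · exact Or.inr h
      · exact Or.inr ⟨h.1, h'.2⟩

lemma bl_iff (A : Finset α) (x y : α) : bl A x y ↔ x = y ∨ (x ∈ A ∧ y ∈ A) := Iff.rfl

lemma bl_le (A : Finset α) (E : Setoid α) : bl A ≤ E ↔ ∀ x ∈ A, ∀ y ∈ A, E x y := by
  constructor
  · intro h x hx y hy
    exact h (Or.inr ⟨hx, hy⟩)
  · rintro h x y (rfl | ⟨hx, hy⟩)
    · exact E.refl _
    · exact h x hx y hy

/-- cycle equivalence relation -/
def orb (σ : Perm α) : Setoid α := Perm.SameCycle.setoid σ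

lemma orb_le (σ : Perm α) (E : Setoid α) : orb σ ≤ E ↔ ∀ x, E x (σ x) := by
  constructor
  · intro h x
    exact h (⟨1, by simp⟩ : σ.SameCycle x (σ x))
  · intro h x y hxy
    obtain ⟨i, rfl⟩ : σ.SameCycle x y := hxy
    have hn : ∀ n : ℕ, ∀ x, E x ((σ ^ n) x) := by
      intro n
      induction n with
      | zero => intro x; exact E.refl _
      | succ n ih => intro x; rw [pow_succ', Perm.mul_apply]; exact E.trans (ih x) (h _)
    rcases Int.eq_nat_or_neg i with ⟨n, rfl | rfl⟩
    · simpa using hn n x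
    · have := hn n ((σ ^ (-(n : ℤ))) x)
      simp at this
      simpa using E.symm this

lemma orb_self (σ : Perm α) (x : α) : orb σ x (σ x) := (orb_le σ (orb σ)).1 le_rfl x

variable [DecidableEq α]

lemma orb_swap_le (a b : α) (E : Setoid α) : orb (swap a b) ≤ E ↔ E a b := by
  rw [orb_le]
  constructor
  · intro h; simpa using h a
  · intro h x
    rw [swap_apply_def]
    split_ifs with h1 h2
    · subst h1; exact h
    · subst h2; exact E.symm h
    · exact E.refl _

lemma orb_swap (a b : α) : orb (swap a b) a b := (orb_swap_le a b _).1 le_rfl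

/-- union of two relations on disjoint blocks -/
lemma sup_disj (B C : Finset α) (h : Disjoint B C) (E F : Setoid α) (hE : E ≤ bl B) (hF : F ≤ bl C)
    (x y : α) : (E ⊔ F) x y ↔ E x y ∨ F x y := by
  have key : ∀ x y z, E x y → F y z → E x z ∨ F x z := by
    intro x y z h1 h2
    rcases hE h1 with rfl | h3
    · exact Or.inr h2
    · rcases hF h2 with rfl | h4
      · exact Or.inl h1
      · exact absurd h4.1 (Finset.disjoint_left.mp h h3.2)
  constructor
  · let K : Setoid α :=
      { r := fun x y => E x y ∨ F x y
        iseqv := by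
          refine ⟨fun x => Or.inl (E.refl _), ?_, ?_⟩
          · rintro x y (h | h)
            · exact Or.inl (E.symm h)
            · exact Or.inr (F.symm h)
          · rintro x y z (h1 | h1) (h2 | h2)
            · exact Or.inl (E.trans h1 h2)
            · exact key _ _ _ h1 h2
            · rcases key _ _ _ (E.symm h2) (F.symm h1) with h | h
              · exact Or.inl (E.symm h)
              · exact Or.inr (F.symm h)
            · exact Or.inr (F.trans h1 h2) }
    have : E ⊔ F ≤ K := sup_le (fun x y h => Or.inl h) (fun x y h => Or.inr h)
    intro hh
    exact this hh
  · rintro (h | h)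
    · exact (le_sup_left : E ≤ E ⊔ F) h
    · exact (le_sup_right : F ≤ E ⊔ F) h

/-- states -/
@[ext] structure St (α : Type*) where
  perm : Perm α
  rel : Setoid α

instance : Mul (St α) := ⟨fun s t => ⟨s.perm * t.perm, s.rel ⊔ t.rel⟩⟩
instance : One (St α) := ⟨⟨1, ⊥⟩⟩
lemma mul_perm (s t : St α) : (s * t).perm = s.perm * t.perm := rfl
lemma mul_rel (s t : St α) : (s * t).rel = s.rel ⊔ t.rel := rfl
lemma one_perm : (1 : St α).perm = 1 := rfl
lemma one_rel : (1 : St α).rel = ⊥ := rfl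
instance : Monoid (St α) where
  mul_assoc a b c := by
    apply St.ext
    · exact mul_assoc _ _ _
    · exact sup_assoc _ _ _
  one_mul a := by
    apply St.ext
    · exact one_mul _
    · exact bot_sup_eq _
  mul_one a := by
    apply St.ext
    · exact mul_one _
    · exact sup_bot_eq _

abbrev Rg (α : Type*) := MonoidAlgebra ℚ (St α)

/-- letter -/
def lt (τ : Perm α) : St α := ⟨τ, orb τ⟩

noncomputable def L (F : Finset (Perm α)) : Rg α := ∑ τ ∈ F, MonoidAlgebra.single (lt τ) 1

def Supp (x : Rg α) (P : St α → Prop) : Prop := ∀ s, x.coeff s ≠ 0 → P s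

lemma coeff_ne (x y : Rg α) (s : St α) (h : (x * y).coeff s ≠ 0) :
    ∃ g k, g * k = s ∧ x.coeff g ≠ 0 ∧ y.coeff k ≠ 0 := by
  classical
  by_contra hc
  push Not at hc
  apply h
  rw [MonoidAlgebra.coeff_mul, Finsupp.sum]
  refine Finset.sum_eq_zero fun g hg => ?_
  rw [Finsupp.sum]
  refine Finset.sum_eq_zero fun k hk => ?_
  split_ifs with hh
  · rw [hc g k hh (by simpa using hg), mul_zero]
  · rfl

lemma L_coeff_ne (F : Finset (Perm α)) (s : St α) (h : (L F).coeff s ≠ 0) : ∃ τ ∈ F, lt τ = s := by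
  classical
  rw [L, MonoidAlgebra.coeff_sum, Finsupp.finsetSum_apply] at h
  obtain ⟨τ, hτ, h1⟩ := Finset.exists_ne_zero_of_sum_ne_zero h
  refine ⟨τ, hτ, ?_⟩
  by_contra hne
  apply h1
  rw [MonoidAlgebra.coeff_single, Finsupp.single_apply, if_neg hne]

lemma supp_step (F : Finset (Perm α)) (y : Rg α) (P Q : St α → Prop)
    (h : ∀ τ ∈ F, ∀ s, P s → Q (lt τ * s)) (hy : Supp y P) : Supp (L F * y) Q := by
  intro s hs
  obtain ⟨g, k, rfl, hg, hk⟩ := coeff_ne _ _ _ hs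
  obtain ⟨τ, hτ, rfl⟩ := L_coeff_ne F g hg
  exact h τ hτ k (hy k hk)

lemma supp_one : Supp (1 : Rg α) (fun s => s = 1) := by
  classical
  intro s hs
  rw [MonoidAlgebra.one_def, MonoidAlgebra.coeff_single, Finsupp.single_apply] at hs
  by_contra hne
  exact hs (if_neg (fun h => hne h.symm))

/-- products of letters satisfy any inductive predicate -/
lemma supp_word (F F' : Finset (Perm α)) (P : ℕ → St α → Prop) (h1 : P 0 1)
    (h : ∀ τ, τ ∈ F ∨ τ ∈ F' → ∀ m s, P m s → P (m + 1) (lt τ * s)) (r q : ℕ) :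
    Supp (L F ^ r * L F' ^ q) (P (r + q)) := by
  classical
  induction r with
  | zero =>
    rw [pow_zero, one_mul, zero_add]
    induction q with
    | zero => rw [pow_zero]; intro s hs; rw [supp_one s hs]; exact h1
    | succ q ih =>
      rw [pow_succ']
      exact supp_step _ _ _ _ (fun τ hτ s => h τ (Or.inr hτ) q s) ih
  | succ r ih =>
    rw [pow_succ', mul_assoc]
    have := supp_step _ _ _ (P (r + q + 1)) (fun τ hτ s => h τ (Or.inl hτ) (r + q) s) ih
    rw [show r + 1 + q = r + q + 1 by ring]
    exact this

end comb
end Hz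

namespace Hz
set_option linter.unusedSectionVars false
open Finset
section comb
variable {α : Type*} [DecidableEq α] [Fintype α]

/-- number of classes -/
noncomputable def cl (E : Setoid α) : ℕ := Nat.card (Quotient E)

lemma cl_mono {E F : Setoid α} (h : E ≤ F) : cl F ≤ cl E := by
  refine Nat.card_le_card_of_surjective (Quotient.map' (s₁ := E) (s₂ := F) id (fun x y hxy => h hxy)) ?_
  intro q
  induction q using Quotient.inductionOn with
  | h x => exact ⟨Quotient.mk E x, rfl⟩

lemma cl_sup_swap (E : Setoid α) (a b : α) : cl E ≤ cl (E ⊔ orb (swap a b)) + 1 := by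
  classical
  let g : Quotient E → Quotient E := fun q => if q = Quotient.mk E b then Quotient.mk E a else q
  let f : α → Quotient E := fun x => g (Quotient.mk E x)
  have h1 : E ⊔ orb (swap a b) ≤ Setoid.ker f := by
    refine sup_le ?_ ?_
    · intro x y hxy
      have : Quotient.mk E x = Quotient.mk E y := Quotient.sound hxy
      change g _ = g _
      rw [this]
    · rw [orb_swap_le]
      change g _ = g _
      simp only [g]
      split_ifs <;> rfl
  have h2 := cl_mono h1
  have h3 : cl (Setoid.ker f) = Nat.card (Set.range f) :=
    Nat.card_congr (Setoid.quotientKerEquivRange f)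
  have h4 : (Set.univ : Set (Quotient E)) ⊆ insert (Quotient.mk E b) (Set.range f) := by
    intro q _
    by_cases hq : q = Quotient.mk E b
    · exact Or.inl hq
    · right
      induction q using Quotient.inductionOn with
      | h x => exact ⟨x, by simp only [f, g]; rw [if_neg hq]⟩
  have h5 := Set.ncard_le_ncard h4 (Set.toFinite _)
  have h6 := Set.ncard_insert_le (Quotient.mk E b) (Set.range f)
  rw [Set.ncard_univ] at h5
  rw [Nat.card_coe_set_eq] at h3
  unfold cl at *
  omega

lemma cl_lt {E F : Setoid α} (h : E ≤ F) (a b : α) (hE : ¬ E a b) (hF : F a b) : cl F < cl E := by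
  classical
  let f : Quotient E → Quotient F := Quotient.map' id (fun x y hxy => h hxy)
  have hs : Function.Surjective f := by
    intro q
    induction q using Quotient.inductionOn with
    | h x => exact ⟨Quotient.mk E x, rfl⟩
  rcases lt_or_eq_of_le (cl_mono h) with h1 | h1
  · exact h1
  · exfalso
    have hb : Function.Bijective f := (Nat.bijective_iff_surjective_and_card f).2 ⟨hs, h1.symm⟩
    have : f (Quotient.mk E a) = f (Quotient.mk E b) := Quotient.sound hF
    exact hE (Quotient.exact (hb.1 this))

lemma cl_bot : cl (⊥ : Setoid α) = Fintype.card α := by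
  have : Function.Bijective (Quotient.mk (⊥ : Setoid α)) := by
    constructor
    · intro x y h; exact Quotient.exact h
    · exact Quotient.mk_surjective
  rw [cl, ← Nat.card_eq_of_bijective _ this, Nat.card_eq_fintype_card]

lemma cl_bl (A : Finset α) (hA : A.Nonempty) : cl (bl A) + A.card ≤ Fintype.card α + 1 := by
  obtain ⟨a, ha⟩ := hA
  let f : Option {x // x ∈ Aᶜ} → Quotient (bl A) := fun o => match o with
    | none => Quotient.mk _ a
    | some x => Quotient.mk _ x.1
  have hs : Function.Surjective f := by
    intro q
    induction q using Quotient.inductionOn with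
    | h x =>
      by_cases hx : x ∈ A
      · exact ⟨none, Quotient.sound (Or.inr ⟨ha, hx⟩)⟩
      · exact ⟨some ⟨x, by simpa using hx⟩, rfl⟩
  have h1 := Nat.card_le_card_of_surjective f hs
  rw [Nat.card_eq_fintype_card (α := Option _), Fintype.card_option, Fintype.card_coe, card_compl] at h1
  have h2 := Finset.card_le_univ A
  unfold cl
  omega

lemma orb_mul_le (σ τ : Perm α) : orb (τ * σ) ≤ orb σ ⊔ orb τ := by
  rw [orb_le]
  intro x
  exact (orb σ ⊔ orb τ).trans ((le_sup_left : orb σ ≤ _) (orb_self σ x))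
    ((le_sup_right : orb τ ≤ _) (orb_self τ (σ x)))

lemma ell_ge (σ : Perm α) (a b : α) : cl (orb σ) ≤ cl (orb (swap a b * σ)) + 1 :=
  (cl_sup_swap (orb σ) a b).trans (by
    have := cl_mono (orb_mul_le σ (swap a b)); omega)

lemma ell_le (σ : Perm α) (a b : α) : cl (orb (swap a b * σ)) ≤ cl (orb σ) + 1 := by
  have := ell_ge (swap a b * σ) a b
  rwa [← mul_assoc, swap_mul_self, one_mul] at this

lemma join_swap (σ : Perm α) (a b : α) (h : ¬ orb σ a b) : orb (swap a b * σ) a b := by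
  have hper : 0 < Function.minimalPeriod σ a :=
    Function.minimalPeriod_pos_of_mem_periodicPts
      (Function.Injective.mem_periodicPts σ.injective a)
  have h1 : ∀ i < Function.minimalPeriod σ a, orb (swap a b * σ) a (σ^[i] a) := by
    intro i
    induction i with
    | zero => intro _; exact (orb _).refl _
    | succ i ih =>
      intro hi
      have h2 := ih (by omega)
      have h3 : (swap a b * σ) (σ^[i] a) = σ^[i + 1] a := by
        rw [Perm.mul_apply, ← Function.iterate_succ_apply' σ]
        refine swap_apply_of_ne_of_ne ?_ ?_
        · exact Function.not_isPeriodicPt_of_pos_of_lt_minimalPeriod (by omega) hi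
        · intro hb
          apply h
          refine (⟨(i + 1 : ℕ), ?_⟩ : σ.SameCycle a b)
          rw [zpow_natCast, Perm.coe_pow, hb]
      have h4 := orb_self (swap a b * σ) (σ^[i] a)
      rw [h3] at h4
      exact (orb _).trans h2 h4
  have h2 := h1 (Function.minimalPeriod σ a - 1) (by omega)
  have h3 : (swap a b * σ) (σ^[Function.minimalPeriod σ a - 1] a) = b := by
    rw [Perm.mul_apply, ← Function.iterate_succ_apply' σ]
    rw [show (Function.minimalPeriod σ a - 1).succ = Function.minimalPeriod σ a by omega]
    rw [Function.iterate_minimalPeriod, swap_apply_left]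
  have h4 := orb_self (swap a b * σ) (σ^[Function.minimalPeriod σ a - 1] a)
  rw [h3] at h4
  exact (orb _).trans h2 h4

lemma ell_drop (σ : Perm α) (a b : α) (h : ¬ orb σ a b) : cl (orb (swap a b * σ)) + 1 ≤ cl (orb σ) := by
  refine cl_lt ?_ a b h (join_swap σ a b h)
  have h1 := orb_mul_le (swap a b * σ) (swap a b)
  rw [← mul_assoc, swap_mul_self, one_mul] at h1
  refine h1.trans (sup_le le_rfl ?_)
  rw [orb_swap_le]
  exact join_swap σ a b h

/-- the Euler characteristic inequality -/
def Eu (m : ℕ) (s : St α) : Prop :=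
  orb s.perm ≤ s.rel ∧ Fintype.card α + cl (orb s.perm) ≤ m + 2 * cl s.rel

lemma Eu_one : Eu 0 (1 : St α) := by
  have : orb (1 : Perm α) ≤ ⊥ := by
    rw [orb_le]; intro x; exact rfl
  refine ⟨this, ?_⟩
  have h2 : orb (1 : Perm α) = ⊥ := le_bot_iff.1 this
  rw [one_perm, one_rel, h2, cl_bot]
  omega

lemma Eu_step (τ : Perm α) (hτ : τ.IsSwap) (m : ℕ) (s : St α) (h : Eu m s) :
    Eu (m + 1) (lt τ * s) := by
  obtain ⟨a, b, hab, rfl⟩ := hτ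
  obtain ⟨h1, h2⟩ := h
  constructor
  · rw [mul_perm, mul_rel]
    refine (orb_mul_le _ _).trans (sup_le (h1.trans le_sup_right) le_sup_left)
  · rw [mul_perm, mul_rel]
    change _ + cl (orb (swap a b * s.perm)) ≤ _ + 2 * cl (orb (swap a b) ⊔ s.rel)
    by_cases hE : s.rel a b
    · have : orb (swap a b) ⊔ s.rel = s.rel := sup_eq_right.2 ((orb_swap_le _ _ _).2 hE)
      rw [this]
      have := ell_le s.perm a b
      omega
    · have h3 := ell_drop s.perm a b (fun hh => hE (h1 hh))
      have h4 := cl_sup_swap s.rel a b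
      rw [sup_comm] at h4
      omega

lemma Eu_word (F F' : Finset (Perm α)) (hF : ∀ τ ∈ F, τ.IsSwap) (hF' : ∀ τ ∈ F', τ.IsSwap)
    (r q : ℕ) : Supp (L F ^ r * L F' ^ q) (Eu (r + q)) := by
  refine supp_word F F' Eu Eu_one ?_ r q
  rintro τ (h | h) m s hs
  · exact Eu_step τ (hF τ h) m s hs
  · exact Eu_step τ (hF' τ h) m s hs

lemma ell_formPerm (x : α) (l : List α) (σ : Perm α) (j : ℕ) (h : Fintype.card α ≤ cl (orb σ) + j) :
    Fintype.card α ≤ cl (orb ((x :: l).formPerm * σ)) + (j + l.length) := by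
  induction l generalizing x with
  | nil => simpa using h
  | cons y l ih =>
    have h1 := ih y
    rw [List.formPerm_cons_cons, mul_assoc]
    have h2 := ell_ge ((y :: l).formPerm * σ) x y
    simp only [List.length_cons]
    omega

lemma ell_one : Fintype.card α ≤ cl (orb (1 : Perm α)) + 0 := by
  have : orb (1 : Perm α) ≤ ⊥ := by
    rw [orb_le]; intro x; exact rfl
  rw [le_bot_iff.1 this, cl_bot]; omega

lemma Eu_bound (m j : ℕ) (σ : Perm α) (A : Finset α) (hA : A.Nonempty) (h : Eu m ⟨σ, bl A⟩)
    (hj : Fintype.card α ≤ cl (orb σ) + j) : 2 * A.card ≤ m + j + 2 := by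
  have h1 := h.2
  have h2 := cl_bl A hA
  simp only at h1
  omega

end comb
end Hz

namespace Hz
set_option linter.unusedSectionVars false
open Finset
section comb
variable {α : Type*} [DecidableEq α] [Fintype α]

/-- transpositions inside `A` -/
noncomputable def sw (A : Finset α) : Finset (Perm α) := by
  classical
  exact univ.filter (fun τ => τ.IsSwap ∧ ∀ x, τ x ≠ x → x ∈ A)

lemma mem_sw (A : Finset α) (τ : Perm α) : τ ∈ sw A ↔ τ.IsSwap ∧ ∀ x, τ x ≠ x → x ∈ A := by
  classical
  simp [sw]

lemma swap_mem_sw (A : Finset α) (a b : α) (hab : a ≠ b) : swap a b ∈ sw A ↔ a ∈ A ∧ b ∈ A := by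
  rw [mem_sw]
  constructor
  · rintro ⟨_, h⟩
    refine ⟨h a ?_, h b ?_⟩
    · simpa using hab.symm
    · simpa using hab
  · rintro ⟨ha, hb⟩
    refine ⟨⟨a, b, hab, rfl⟩, fun x hx => ?_⟩
    rw [swap_apply_def] at hx
    split_ifs at hx with h1 h2
    · rwa [h1]
    · rwa [h2]
    · exact absurd rfl hx

/-- transpositions inside `A` moving `a` -/
def star (a : α) (A : Finset α) : Finset (Perm α) := (A.erase a).image (swap a)

lemma mem_star (a : α) (A : Finset α) (τ : Perm α) :
    τ ∈ star a A ↔ ∃ w ∈ A, w ≠ a ∧ swap a w = τ := by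
  simp [star, and_assoc, and_left_comm]

lemma star_swap (a : α) (A : Finset α) : ∀ τ ∈ star a A, τ.IsSwap := by
  intro τ h
  obtain ⟨w, _, hw, rfl⟩ := (mem_star _ _ _).1 h
  exact ⟨a, w, hw.symm, rfl⟩

lemma sw_swap (A : Finset α) : ∀ τ ∈ sw A, τ.IsSwap := fun _ h => ((mem_sw _ _).1 h).1

lemma sum_star {M : Type*} [AddCommMonoid M] (a : α) (A : Finset α) (f : Perm α → M) :
    ∑ τ ∈ star a A, f τ = ∑ w ∈ A.erase a, f (swap a w) := by
  rw [star, Finset.sum_image]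
  intro x _ y _ h
  have := congrArg (fun σ : Perm α => σ a) h
  simpa using this

lemma L_union (F F' : Finset (Perm α)) (h : Disjoint F F') : L (F ∪ F') = L F + L F' :=
  Finset.sum_union h

lemma star_disj (a : α) (A : Finset α) : Disjoint (star a A) (sw (A.erase a)) := by
  rw [Finset.disjoint_left]
  intro τ h1 h2
  obtain ⟨w, hw, hwa, rfl⟩ := (mem_star _ _ _).1 h1
  have := ((mem_sw _ _).1 h2).2 a (by simpa using hwa)
  simp at this

lemma sw_eq (a : α) (A : Finset α) (ha : a ∈ A) : sw A = star a A ∪ sw (A.erase a) := by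
  ext τ
  rw [mem_union, mem_star]
  constructor
  · intro h
    obtain ⟨x, y, hxy, rfl⟩ := sw_swap A τ h
    have h2 := (swap_mem_sw A x y hxy).1 h
    by_cases hx : x = a
    · subst hx; exact Or.inl ⟨y, h2.2, hxy.symm, rfl⟩
    by_cases hy : y = a
    · subst hy; exact Or.inl ⟨x, h2.1, hx, swap_comm _ _⟩
    · right
      rw [swap_mem_sw _ _ _ hxy]; simp [hx, hy, h2]
  · rintro (⟨w, hw, hwa, rfl⟩ | h)
    · rw [swap_mem_sw _ _ _ hwa.symm]; exact ⟨ha, hw⟩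
    · rw [mem_sw] at h ⊢
      exact ⟨h.1, fun x hx => Finset.mem_of_mem_erase (h.2 x hx)⟩

lemma L_sw (a : α) (A : Finset α) (ha : a ∈ A) : L (sw A) = L (star a A) + L (sw (A.erase a)) := by
  rw [sw_eq a A ha, L_union _ _ (star_disj a A)]

lemma single_mul (τ ρ : Perm α) : (MonoidAlgebra.single (lt τ) 1 : Rg α) *
    MonoidAlgebra.single (lt ρ) 1 = MonoidAlgebra.single (lt τ * lt ρ) 1 := by
  rw [MonoidAlgebra.single_mul_single, one_mul]

lemma star_commute (a : α) (A : Finset α) : Commute (L (star a A)) (L (sw (A.erase a))) := by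
  unfold L
  refine Commute.sum_right _ _ _ fun ρ hρ => ?_
  rw [sum_star]
  rw [mem_sw] at hρ
  obtain ⟨_, hρ⟩ := hρ
  have ha : ρ a = a := by
    by_contra h
    simpa using hρ a h
  have hi : ∀ w, w ∈ A.erase a ↔ ρ w ∈ A.erase a := by
    intro w
    by_cases h : ρ w = w
    · rw [h]
    · have h2 : ρ (ρ w) ≠ ρ w := fun h' => h (ρ.injective h')
      exact ⟨fun _ => hρ _ h2, fun _ => hρ _ h⟩
  rw [Commute, SemiconjBy, Finset.sum_mul, Finset.mul_sum]
  symm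
  refine Finset.sum_bij (fun w _ => ρ w) (fun w hw => (hi w).1 hw) (fun x _ y _ h => ρ.injective h)
    (fun w hw => ⟨ρ.symm w, (hi _).2 (by simpa using hw), by simp⟩) ?_
  intro w hw
  rw [single_mul, single_mul]
  congr 1
  apply St.ext
  · change ρ * swap a w = swap a (ρ w) * ρ
    rw [Equiv.mul_swap_eq_swap_mul, ha]
  · change orb ρ ⊔ orb (swap a w) = orb (swap a (ρ w)) ⊔ orb ρ
    rw [sup_comm]
    apply le_antisymm
    · refine sup_le ((orb_swap_le _ _ _).2 ?_) le_sup_right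
      have h1 := (le_sup_left : _ ≤ orb (swap a (ρ w)) ⊔ orb ρ) (orb_swap a (ρ w))
      have h2 := (le_sup_right : _ ≤ orb (swap a (ρ w)) ⊔ orb ρ) (orb_self ρ w)
      exact Setoid.trans' _ h1 (Setoid.symm' _ h2)
    · refine sup_le ((orb_swap_le _ _ _).2 ?_) le_sup_right
      have h1 := (le_sup_left : _ ≤ orb (swap a w) ⊔ orb ρ) (orb_swap a w)
      have h2 := (le_sup_right : _ ≤ orb (swap a w) ⊔ orb ρ) (orb_self ρ w)
      exact Setoid.trans' _ h1 h2

lemma sw_commute (B C : Finset α) (h : Disjoint B C) : Commute (L (sw B)) (L (sw C)) := by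
  unfold L
  refine Commute.sum_right _ _ _ fun ρ hρ => Commute.sum_left _ _ _ fun τ hτ => ?_
  rw [Commute, SemiconjBy, single_mul, single_mul]
  congr 1
  rw [mem_sw] at hρ hτ
  have hd : Perm.Disjoint τ ρ := by
    intro x
    by_contra hc
    push Not at hc
    exact Finset.disjoint_left.1 h (hτ.2 x hc.1) (hρ.2 x hc.2)
  apply St.ext
  · exact hd.commute
  · exact sup_comm _ _

/-- restriction to words whose relation is below `E` -/
noncomputable def prj (E : Setoid α) : Rg α →ₐ[ℚ] Rg α := by
  classical
  exact MonoidAlgebra.lift ℚ (Rg α) (St α)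
    { toFun := fun s => if s.rel ≤ E then MonoidAlgebra.single s 1 else 0
      map_one' := by rw [if_pos (by rw [one_rel]; exact bot_le)]; rfl
      map_mul' := by
        intro s t
        rw [mul_rel]
        by_cases h1 : s.rel ≤ E
        · by_cases h2 : t.rel ≤ E
          · rw [if_pos (sup_le h1 h2), if_pos h1, if_pos h2, MonoidAlgebra.single_mul_single, one_mul]
          · rw [if_neg (fun h => h2 (le_sup_right.trans h)), if_neg h2, mul_zero]
        · rw [if_neg (fun h => h1 (le_sup_left.trans h)), if_neg h1, zero_mul] }

open Classical in
lemma prj_single (E : Setoid α) (s : St α) (c : ℚ) : prj E (MonoidAlgebra.single s c) =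
    if s.rel ≤ E then MonoidAlgebra.single s c else 0 := by
  rw [prj, MonoidAlgebra.lift_single]
  change c • (if s.rel ≤ E then _ else _) = _
  split_ifs
  · rw [MonoidAlgebra.smul_single, smul_eq_mul, mul_one]
  · rw [smul_zero]

lemma coeff_prj (E : Setoid α) (x : Rg α) (s : St α) (h : s.rel ≤ E) :
    (prj E x).coeff s = x.coeff s := by
  classical
  induction x using MonoidAlgebra.induction_linear with
  | zero => simp
  | add x y hx hy => rw [map_add, MonoidAlgebra.coeff_add, Finsupp.add_apply, hx, hy]; rfl
  | single t c =>
    rw [prj_single]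
    split_ifs with ht
    · rfl
    · rw [MonoidAlgebra.coeff_single, Finsupp.single_apply, if_neg]
      · rfl
      · rintro rfl; exact ht h

open Classical in
lemma prj_L (E : Setoid α) (F : Finset (Perm α)) : prj E (L F) = L (F.filter (fun τ => orb τ ≤ E)) := by
  rw [L, map_sum, L, Finset.sum_filter]
  refine Finset.sum_congr rfl fun τ _ => ?_
  rw [prj_single]; rfl

open Classical in
lemma star_filter (B C : Finset α) (h : Disjoint C B) (a : α) (ha : a ∈ C) :
    (star a (C ∪ B)).filter (fun τ => orb τ ≤ bl C ⊔ bl B) = star a C := by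
  ext τ
  rw [mem_filter, mem_star, mem_star]
  constructor
  · rintro ⟨⟨w, hw, hwa, rfl⟩, h2⟩
    rw [orb_swap_le, sup_disj C B h _ _ le_rfl le_rfl, bl_iff, bl_iff] at h2
    refine ⟨w, ?_, hwa, rfl⟩
    rcases h2 with (h2 | h2) | (h2 | h2)
    · exact absurd h2.symm hwa
    · exact h2.2
    · exact absurd h2.symm hwa
    · exact absurd h2.1 (Finset.disjoint_left.1 h ha)
  · rintro ⟨w, hw, hwa, rfl⟩
    refine ⟨⟨w, by simp [hw], hwa, rfl⟩, ?_⟩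
    rw [orb_swap_le, sup_disj C B h _ _ le_rfl le_rfl]
    exact Or.inl (Or.inr ⟨ha, hw⟩)

open Classical in
lemma sw_filter (B C : Finset α) (h : Disjoint C B) (a : α) (ha : a ∈ C) :
    (sw ((C ∪ B).erase a)).filter (fun τ => orb τ ≤ bl C ⊔ bl B) = sw (C.erase a) ∪ sw B := by
  have haB : a ∉ B := Finset.disjoint_left.1 h ha
  ext τ
  rw [mem_filter, mem_union]
  constructor
  · rintro ⟨h1, h2⟩
    obtain ⟨x, y, hxy, rfl⟩ := sw_swap _ τ h1
    rw [swap_mem_sw _ _ _ hxy] at h1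
    rw [orb_swap_le, sup_disj C B h _ _ le_rfl le_rfl, bl_iff, bl_iff] at h2
    rw [swap_mem_sw _ _ _ hxy, swap_mem_sw _ _ _ hxy]
    simp only [mem_erase, mem_union] at h1 ⊢
    tauto
  · intro h1
    have hs : τ.IsSwap := by
      rcases h1 with h1 | h1
      · exact sw_swap _ _ h1
      · exact sw_swap _ _ h1
    obtain ⟨x, y, hxy, rfl⟩ := hs
    rw [swap_mem_sw _ _ _ hxy, swap_mem_sw _ _ _ hxy] at h1
    rw [swap_mem_sw _ _ _ hxy]
    rw [orb_swap_le, sup_disj C B h _ _ le_rfl le_rfl, bl_iff, bl_iff]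
    simp only [mem_erase, mem_union] at h1 ⊢
    rcases h1 with h1 | h1
    · tauto
    · have : x ≠ a := fun hh => haB (hh ▸ h1.1)
      have : y ≠ a := fun hh => haB (hh ▸ h1.2)
      tauto

lemma sw_disj (B C : Finset α) (h : Disjoint C B) : Disjoint (sw C) (sw B) := by
  rw [Finset.disjoint_left]
  intro τ h1 h2
  obtain ⟨x, y, hxy, rfl⟩ := sw_swap _ τ h1
  rw [swap_mem_sw _ _ _ hxy] at h1 h2
  exact Finset.disjoint_left.1 h h1.1 h2.1

/-- good support on a block -/
def Gb (A : Finset α) (s : St α) : Prop := orb s.perm ≤ s.rel ∧ s.rel ≤ bl A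

lemma Gb_word (A : Finset α) (F F' : Finset (Perm α)) (hF : ∀ τ ∈ F, τ ∈ sw A)
    (hF' : ∀ τ ∈ F', τ ∈ sw A) (r q : ℕ) : Supp (L F ^ r * L F' ^ q) (Gb A) := by
  refine supp_word F F' (fun _ => Gb A) ?_ ?_ r q
  · refine ⟨?_, bot_le⟩
    rw [orb_le]; intro x; exact rfl
  · intro τ h m s hs
    have h' : τ ∈ sw A := by
      rcases h with h | h
      · exact hF _ h
      · exact hF' _ h
    refine ⟨(orb_mul_le _ _).trans (sup_le (hs.1.trans le_sup_right) le_sup_left), sup_le ?_ hs.2⟩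
    change orb τ ≤ _
    rw [orb_le]
    intro x
    rw [mem_sw] at h'
    by_cases hx : τ x = x
    · exact Or.inl hx.symm
    · exact Or.inr ⟨h'.2 x hx, h'.2 _ (fun h => hx (τ.injective h))⟩

/-- coefficient factorization over disjoint blocks -/
lemma coeff_factor (B C : Finset α) (h : Disjoint C B) (x z : Rg α) (hx : Supp x (Gb C))
    (hz : Supp z (Gb B)) (γ β : Perm α) (hγ : orb γ ≤ bl C) (hβ : orb β ≤ bl B) :
    (x * z).coeff ⟨γ * β, bl C ⊔ bl B⟩ = x.coeff ⟨γ, bl C⟩ * z.coeff ⟨β, bl B⟩ := by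
  classical
  have key : ∀ g k : St α, Gb C g → Gb B k → g * k = ⟨γ * β, bl C ⊔ bl B⟩ →
      g = ⟨γ, bl C⟩ ∧ k = ⟨β, bl B⟩ := by
    intro g k hg hk hgk
    have h1 : g.perm * k.perm = γ * β := congrArg St.perm hgk
    have h2 : g.rel ⊔ k.rel = bl C ⊔ bl B := congrArg St.rel hgk
    have hCB : ∀ x ∈ C, x ∉ B := fun x hx => Finset.disjoint_left.1 h hx
    -- permutations
    have fixB : ∀ σ : Perm α, orb σ ≤ bl B → ∀ x, x ∉ B → σ x = x := by
      intro σ hσ x hx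
      rcases (orb_le _ _).1 hσ x with h | h
      · exact h.symm
      · exact absurd h.1 hx
    have fixC : ∀ σ : Perm α, orb σ ≤ bl C → ∀ x, x ∉ C → σ x = x := by
      intro σ hσ x hx
      rcases (orb_le _ _).1 hσ x with h | h
      · exact h.symm
      · exact absurd h.1 hx
    have hgC := hg.1.trans hg.2
    have hkB := hk.1.trans hk.2
    have hgγ : g.perm = γ := by
      ext x
      by_cases hxC : x ∈ C
      · have := congrArg (fun σ : Perm α => σ x) h1
        simp only [Perm.mul_apply] at this
        rwa [fixB _ hkB x (hCB x hxC), fixB _ hβ x (hCB x hxC)] at this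
      · rw [fixC _ hgC x hxC, fixC _ hγ x hxC]
    have hkβ : k.perm = β := by
      rw [hgγ] at h1; exact mul_left_cancel h1
    have hgr : g.rel = bl C := by
      refine le_antisymm hg.2 ((bl_le _ _).2 fun x hx y hy => ?_)
      have : (g.rel ⊔ k.rel) x y := by
        rw [h2, sup_disj C B h _ _ le_rfl le_rfl]; exact Or.inl (Or.inr ⟨hx, hy⟩)
      rw [sup_disj C B h _ _ hg.2 hk.2] at this
      rcases this with h3 | h3
      · exact h3
      · rcases hk.2 h3 with rfl | h4
        · exact g.rel.refl _
        · exact absurd h4.1 (hCB x hx)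
    have hkr : k.rel = bl B := by
      refine le_antisymm hk.2 ((bl_le _ _).2 fun x hx y hy => ?_)
      have : (g.rel ⊔ k.rel) x y := by
        rw [h2, sup_disj C B h _ _ le_rfl le_rfl]; exact Or.inr (Or.inr ⟨hx, hy⟩)
      rw [sup_disj C B h _ _ hg.2 hk.2] at this
      rcases this with h3 | h3
      · rcases hg.2 h3 with rfl | h4
        · exact k.rel.refl _
        · exact absurd hx (hCB x h4.1)
      · exact h3
    exact ⟨St.ext hgγ hgr, St.ext hkβ hkr⟩
  have hmul : (⟨γ, bl C⟩ * ⟨β, bl B⟩ : St α) = ⟨γ * β, bl C ⊔ bl B⟩ := rfl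
  rw [MonoidAlgebra.coeff_mul, Finsupp.sum, Finset.sum_eq_single ⟨γ, bl C⟩]
  · rw [Finsupp.sum, Finset.sum_eq_single ⟨β, bl B⟩]
    · rw [if_pos hmul]
    · intro k hk hne
      split_ifs with hh
      · by_cases hc : x.coeff ⟨γ, bl C⟩ = 0
        · rw [hc, zero_mul]
        · exact absurd (key _ k (hx _ hc) (hz _ (by simpa using hk)) hh).2 hne
      · rfl
    · intro hk
      rw [if_pos hmul]
      rw [Finsupp.notMem_support_iff.1 hk, mul_zero]
  · intro g hg hne
    rw [Finsupp.sum]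
    refine Finset.sum_eq_zero fun k hk => ?_
    split_ifs with hh
    · exact absurd (key g k (hx _ (by simpa using hg)) (hz _ (by simpa using hk)) hh).1 hne
    · rfl
  · intro hg
    rw [Finsupp.sum]
    refine Finset.sum_eq_zero fun k hk => ?_
    rw [Finsupp.notMem_support_iff.1 hg]; simp

lemma star_sub (a : α) (A : Finset α) (ha : a ∈ A) : ∀ τ ∈ star a A, τ ∈ sw A := by
  intro τ h; rw [sw_eq a A ha]; exact mem_union_left _ h
lemma erase_sub (a : α) (A : Finset α) (ha : a ∈ A) : ∀ τ ∈ sw (A.erase a), τ ∈ sw A := by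
  intro τ h; rw [sw_eq a A ha]; exact mem_union_right _ h

/-- splitting lemma -/
lemma split_coeff (B C : Finset α) (h : Disjoint C B) (a : α) (ha : a ∈ C) (r q : ℕ)
    (γ β : Perm α) (hγ : orb γ ≤ bl C) (hβ : orb β ≤ bl B) :
    (L (star a (C ∪ B)) ^ r * L (sw ((C ∪ B).erase a)) ^ q).coeff ⟨γ * β, bl C ⊔ bl B⟩ =
    ∑ m ∈ range (q + 1), (q.choose m : ℚ) *
      (L (star a C) ^ r * L (sw (C.erase a)) ^ m).coeff ⟨γ, bl C⟩ *
      (L (sw B) ^ (q - m)).coeff ⟨β, bl B⟩ := by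
  classical
  rw [← coeff_prj (bl C ⊔ bl B) _ ⟨γ * β, bl C ⊔ bl B⟩ le_rfl, map_mul, map_pow, map_pow, prj_L, prj_L,
    star_filter B C h a ha, sw_filter B C h a ha]
  have hd : Disjoint (C.erase a) B := Finset.disjoint_of_subset_left (Finset.erase_subset _ _) h
  rw [L_union _ _ (sw_disj _ _ hd), (sw_commute _ _ hd).add_pow, Finset.mul_sum,
    MonoidAlgebra.coeff_sum, Finsupp.finsetSum_apply]
  refine Finset.sum_congr rfl fun m _ => ?_
  have e : L (star a C) ^ r * (L (sw (C.erase a)) ^ m * L (sw B) ^ (q - m) * (q.choose m : Rg α)) =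
      (q.choose m : ℚ) • ((L (star a C) ^ r * L (sw (C.erase a)) ^ m) * L (sw B) ^ (q - m)) := by
    rw [← mul_assoc, ← mul_assoc, ← nsmul_eq_mul', ← Nat.cast_smul_eq_nsmul ℚ]
  rw [e, MonoidAlgebra.coeff_smul, Finsupp.smul_apply, smul_eq_mul, mul_assoc (q.choose m : ℚ)]
  congr 1
  have h2 := Gb_word B (sw B) (sw B) (fun _ h => h) (fun _ h => h) 0 (q - m)
  rw [pow_zero, one_mul] at h2
  exact coeff_factor B C h _ _
    (Gb_word C _ _ (star_sub a C ha) (erase_sub a C ha) r m) h2 γ β hγ hβ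

end comb
end Hz

namespace Hz
set_option linter.unusedSectionVars false
open Finset
section comb
variable {α : Type*} [DecidableEq α] [Fintype α]

/-- two-block relation -/
lemma dbl_iff (A B : Finset α) (x y : α) : (bl (A \ B) ⊔ bl B) x y ↔
    x = y ∨ (x ∈ A \ B ∧ y ∈ A \ B) ∨ (x ∈ B ∧ y ∈ B) := by
  rw [sup_disj (A \ B) B Finset.sdiff_disjoint _ _ le_rfl le_rfl, bl_iff, bl_iff]
  tauto

lemma dbl_sup (A B : Finset α) (a w : α) (ha : a ∈ A \ B) (hw : w ∈ B) (hB : B ⊆ A) :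
    orb (swap a w) ⊔ (bl (A \ B) ⊔ bl B) = bl A := by
  have haA : a ∈ A := (mem_sdiff.1 ha).1
  apply le_antisymm
  · refine sup_le ((orb_swap_le _ _ _).2 (Or.inr ⟨haA, hB hw⟩)) (sup_le ?_ ?_)
    · exact (bl_le _ _).2 fun x hx y hy => Or.inr ⟨(mem_sdiff.1 hx).1, (mem_sdiff.1 hy).1⟩
    · exact (bl_le _ _).2 fun x hx y hy => Or.inr ⟨hB hx, hB hy⟩
  · set E := orb (swap a w) ⊔ (bl (A \ B) ⊔ bl B) with hE
    have h1 : ∀ x ∈ A, E x a := by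
      intro x hx
      by_cases hxB : x ∈ B
      · have h2 : E x w := (le_sup_right : bl (A \ B) ⊔ bl B ≤ E)
          ((dbl_iff A B x w).2 (Or.inr (Or.inr ⟨hxB, hw⟩)))
        have h3 : E a w := (le_sup_left : orb (swap a w) ≤ E) (orb_swap a w)
        exact Setoid.trans' _ h2 (Setoid.symm' _ h3)
      · exact (le_sup_right : bl (A \ B) ⊔ bl B ≤ E)
          ((dbl_iff A B x a).2 (Or.inr (Or.inl ⟨mem_sdiff.2 ⟨hx, hxB⟩, ha⟩)))
    exact (bl_le _ _).2 fun x hx y hy => Setoid.trans' _ (h1 x hx) (Setoid.symm' _ (h1 y hy))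

lemma rel_cases (A : Finset α) (a w : α) (ha : a ∈ A) (hw : w ∈ A) (E : Setoid α) (hE : E ≤ bl A)
    (h : orb (swap a w) ⊔ E = bl A) :
    E = bl A ∨ ∃ B, B ⊆ A.erase a ∧ w ∈ B ∧ E = bl (A \ B) ⊔ bl B := by
  classical
  by_cases haw : E a w
  · left
    rw [← h, sup_eq_right.2 ((orb_swap_le _ _ _).2 haw)]
  right
  have hK : ∀ x ∈ A, E x a ∨ E x w := by
    let K : Setoid α :=
      { r := fun x y => E x y ∨ ((E x a ∨ E x w) ∧ (E y a ∨ E y w))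
        iseqv := by
          refine ⟨fun x => Or.inl (E.refl _), ?_, ?_⟩
          · rintro x y (h | h)
            · exact Or.inl (E.symm h)
            · exact Or.inr h.symm
          · rintro x y z (h1 | h1) (h2 | h2)
            · exact Or.inl (E.trans h1 h2)
            · refine Or.inr ⟨?_, h2.2⟩
              rcases h2.1 with h3 | h3
              · exact Or.inl (E.trans h1 h3)
              · exact Or.inr (E.trans h1 h3)
            · refine Or.inr ⟨h1.1, ?_⟩
              rcases h1.2 with h3 | h3
              · exact Or.inl (E.trans (E.symm h2) h3)
              · exact Or.inr (E.trans (E.symm h2) h3)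
            · exact Or.inr ⟨h1.1, h2.2⟩ }
    have hle : orb (swap a w) ⊔ E ≤ K :=
      sup_le ((orb_swap_le _ _ _).2 (Or.inr ⟨Or.inl (E.refl _), Or.inr (E.refl _)⟩))
        (fun x y h => Or.inl h)
    rw [h] at hle
    intro x hx
    have : K x a := hle (Or.inr ⟨hx, ha⟩)
    rcases this with h1 | h1
    · exact Or.inl h1
    · exact h1.1
  refine ⟨A.filter (fun x => E x w), ?_, ?_, ?_⟩
  · intro x hx
    rw [mem_filter] at hx
    refine mem_erase.2 ⟨?_, hx.1⟩
    rintro rfl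
    exact haw hx.2
  · exact mem_filter.2 ⟨hw, E.refl _⟩
  · apply le_antisymm
    · intro x y hxy
      refine (dbl_iff _ _ _ _).2 ?_
      rcases hE hxy with rfl | ⟨hx, hy⟩
      · exact Or.inl rfl
      · right
        simp only [mem_sdiff, mem_filter, hx, hy, true_and]
        by_cases h1 : E x w
        · exact Or.inr ⟨h1, E.trans (E.symm hxy) h1⟩
        · exact Or.inl ⟨h1, fun h2 => h1 (E.trans hxy h2)⟩
    · refine sup_le ?_ ?_
      · refine (bl_le _ _).2 fun x hx y hy => ?_
        simp only [mem_sdiff, mem_filter, not_and] at hx hy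
        have hx' := (hK x hx.1).resolve_right (hx.2 hx.1)
        have hy' := (hK y hy.1).resolve_right (hy.2 hy.1)
        exact E.trans hx' (E.symm hy')
      · refine (bl_le _ _).2 fun x hx y hy => ?_
        exact E.trans (mem_filter.1 hx).2 (E.symm (mem_filter.1 hy).2)

lemma fp_out (a w : α) (l : List α) (h : (a :: l).Nodup) (hw : w ∉ a :: l) :
    swap a w * (a :: l).formPerm = (a :: (l ++ [w])).formPerm := by
  have h1 : (w :: a :: l).Nodup := List.nodup_cons.2 ⟨hw, h⟩
  have h2 := List.formPerm_rotate_one (w :: a :: l) h1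
  rw [List.rotate_cons_succ, List.rotate_zero, List.formPerm_cons_cons] at h2
  rw [swap_comm, ← h2]; rfl

lemma fp_in (a w : α) (l1 l2 : List α) (h : (a :: (l1 ++ w :: l2)).Nodup) :
    swap a w * (a :: (l1 ++ w :: l2)).formPerm = (a :: l1).formPerm * (w :: l2).formPerm := by
  induction l1 generalizing a with
  | nil =>
    rw [List.nil_append, List.formPerm_cons_cons, ← mul_assoc, swap_mul_self]
    simp
  | cons b l1 ih =>
    have h1 := ih b (List.nodup_cons.1 h).2
    have hab : a ≠ b := by
      rintro rfl; simp at h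
    have haw : a ≠ w := by
      rintro rfl; simp at h
    have hbw : b ≠ w := by
      rintro rfl; simp at h
    rw [List.cons_append, List.formPerm_cons_cons, List.formPerm_cons_cons, mul_assoc (swap a b), ← h1,
      ← mul_assoc, ← mul_assoc]
    congr 1
    have e : swap a w * swap a b = swap a b * swap b w := by
      rw [Equiv.mul_swap_eq_swap_mul (swap a b) b w, swap_apply_right,
        swap_apply_of_ne_of_ne haw.symm hbw.symm]
    rw [e]

lemma fp_orb (l : List α) (B : Finset α) (h : ∀ x ∈ l, x ∈ B) : orb l.formPerm ≤ bl B := by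
  rw [orb_le]
  intro x
  by_cases hx : x ∈ l
  · exact Or.inr ⟨h _ hx, h _ (List.formPerm_apply_mem_of_mem hx)⟩
  · exact Or.inl (List.formPerm_apply_of_notMem hx).symm

lemma fp_rel (a : α) (l : List α) (h : (a :: l).Nodup) (E : Setoid α)
    (hE : ∀ x ∈ a :: l, E x ((a :: l).formPerm x)) : ∀ x ∈ a :: l, E a x := by
  intro x hx
  obtain ⟨i, hi, rfl⟩ := List.getElem_of_mem hx
  induction i with
  | zero => exact E.refl _
  | succ i ih =>
    have h1 := ih (by omega) (List.getElem_mem _)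
    have h2 := hE _ (List.getElem_mem (by omega : i < (a :: l).length))
    rw [List.formPerm_apply_lt_getElem _ h i hi] at h2
    exact E.trans h1 h2

/-- peeling off one letter -/
lemma peel (A : Finset α) (a w : α) (ha : a ∈ A) (hw : w ∈ A) (haw : w ≠ a) (y : Rg α)
    (hy : Supp y (Gb A)) (π : Perm α) :
    (MonoidAlgebra.single (lt (swap a w)) 1 * y).coeff ⟨π, bl A⟩ =
      y.coeff ⟨swap a w * π, bl A⟩ + ∑ B ∈ (A.erase a).powerset.filter (fun B => w ∈ B),
        y.coeff ⟨swap a w * π, bl (A \ B) ⊔ bl B⟩ := by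
  classical
  set σ := swap a w * π with hσ
  set T := (A.erase a).powerset.filter (fun B => w ∈ B) with hT
  have hmem : ∀ B ∈ T, B ⊆ A ∧ a ∉ B ∧ w ∈ B := by
    intro B hB
    rw [hT, mem_filter, mem_powerset] at hB
    exact ⟨fun x hx => mem_of_mem_erase (hB.1 hx), fun h => by simpa using hB.1 h, hB.2⟩
  have hinj : Set.InjOn (fun B : Finset α => (⟨σ, bl (A \ B) ⊔ bl B⟩ : St α)) T := by
    have key : ∀ B ∈ T, ∀ B' ∈ T, bl (A \ B) ⊔ bl B = bl (A \ B') ⊔ bl B' → B ⊆ B' := by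
      intro B hB B' hB' h x hx
      have h1 := (dbl_iff A B x w).2 (Or.inr (Or.inr ⟨hx, (hmem B hB).2.2⟩))
      rw [h, dbl_iff] at h1
      rcases h1 with rfl | h1 | h1
      · exact (hmem B' hB').2.2
      · exact absurd (hmem B' hB').2.2 (mem_sdiff.1 h1.2).2
      · exact h1.1
    intro B hB B' hB' h
    have h2 := congrArg St.rel h
    exact Finset.Subset.antisymm (key B hB B' hB' h2) (key B' hB' B hB h2.symm)
  have hnot : (⟨σ, bl A⟩ : St α) ∉ T.image (fun B : Finset α => (⟨σ, bl (A \ B) ⊔ bl B⟩ : St α)) := by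
    intro h
    obtain ⟨B, hB, h1⟩ := mem_image.1 h
    have h2 : bl (A \ B) ⊔ bl B = bl A := congrArg St.rel h1
    have h3 : (bl A) a w := Or.inr ⟨ha, hw⟩
    rw [← h2, dbl_iff] at h3
    have := hmem B hB
    rcases h3 with h3 | h3 | h3
    · exact haw h3.symm
    · exact (mem_sdiff.1 h3.2).2 this.2.2
    · exact this.2.1 h3.1
  rw [← Finset.sum_image (f := fun k => y.coeff k) hinj, ← Finset.sum_insert hnot,
    MonoidAlgebra.coeff_mul, MonoidAlgebra.coeff_single, Finsupp.sum_single_index (by simp),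
    Finsupp.sum, ← Finset.sum_filter]
  simp only [one_mul]
  refine Finset.sum_subset ?_ ?_
  · intro k hk
    rw [mem_filter] at hk
    have hk1 := hy k (by simpa using hk.1)
    have hp : swap a w * k.perm = π := congrArg St.perm hk.2
    have hr : orb (swap a w) ⊔ k.rel = bl A := congrArg St.rel hk.2
    have hp' : k.perm = σ := by rw [hσ, ← hp, ← mul_assoc, swap_mul_self, one_mul]
    rw [mem_insert, mem_image]
    rcases rel_cases A a w ha hw k.rel hk1.2 hr with h | ⟨B, hB, hwB, h⟩
    · exact Or.inl (St.ext hp' h)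
    · exact Or.inr ⟨B, by rw [hT, mem_filter, mem_powerset]; exact ⟨hB, hwB⟩, St.ext hp'.symm h.symm⟩
  · intro k hk hk2
    by_contra h0
    apply hk2
    rw [mem_filter]
    refine ⟨by simpa using h0, ?_⟩
    rw [mem_insert, mem_image] at hk
    rcases hk with rfl | ⟨B, hB, rfl⟩
    · refine St.ext ?_ ?_
      · change swap a w * σ = π
        rw [hσ, ← mul_assoc, swap_mul_self, one_mul]
      · change orb (swap a w) ⊔ bl A = bl A
        exact sup_eq_right.2 ((orb_swap_le _ _ _).2 (Or.inr ⟨ha, hw⟩))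
    · have := hmem B hB
      refine St.ext ?_ ?_
      · change swap a w * σ = π
        rw [hσ, ← mul_assoc, swap_mul_self, one_mul]
      · exact dbl_sup A B a w (mem_sdiff.2 ⟨ha, this.2.1⟩) this.2.2 this.1

end comb
end Hz

namespace Hz
set_option linter.unusedSectionVars false
open Finset
section comb
variable {α : Type*} [DecidableEq α] [Fintype α]

/-- transitive minimal factorization count -/
def TT (A : Finset α) : Prop := ∀ (a : α) (l : List α), (a :: l).Nodup → (∀ x ∈ a :: l, x ∈ A) →
  ∀ m N : ℕ, m = 2 * N + l.length → N + l.length + 1 = A.card →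
  (L (sw A) ^ m).coeff ⟨(a :: l).formPerm, bl A⟩ =
    (m.factorial : ℚ) * (N.factorial : ℚ) * gam N (l.length + 1)

def QQ (r : ℕ) (A : Finset α) : Prop := ∀ (a : α) (l : List α), (a :: l).Nodup →
  (∀ x ∈ a :: l, x ∈ A) →
  ∀ q N : ℕ, r + q = 2 * N + l.length → N + l.length + 1 = A.card →
  (L (star a A) ^ r * L (sw (A.erase a)) ^ q).coeff ⟨(a :: l).formPerm, bl A⟩ =
    (q.factorial : ℚ) * (N.factorial : ℚ) * qs r N l.length

lemma fp_ell (a : α) (l : List α) : Fintype.card α ≤ cl (orb ((a :: l).formPerm)) + l.length := by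
  have := ell_formPerm a l 1 0 ell_one
  rw [mul_one, zero_add] at this
  exact this

lemma fp_ell2 (a w : α) (l l2 : List α) :
    Fintype.card α ≤ cl (orb ((a :: l).formPerm * (w :: l2).formPerm)) + (l2.length + l.length) :=
  ell_formPerm a l _ _ (fp_ell w l2)

lemma splitval (B C : Finset α) (h : Disjoint C B) (r q Nb Nc : ℕ) (hB : TT B) (hC : QQ r C)
    (a w : α) (l1 l2 : List α) (h1 : (a :: l1).Nodup) (h2 : (w :: l2).Nodup)
    (hs1 : ∀ x ∈ a :: l1, x ∈ C) (hs2 : ∀ x ∈ w :: l2, x ∈ B)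
    (hm : r + q = 2 * Nb + 2 * Nc + l1.length + l2.length)
    (hb : Nb + l2.length + 1 = B.card) (hc : Nc + l1.length + 1 = C.card) :
    (L (star a (C ∪ B)) ^ r * L (sw ((C ∪ B).erase a)) ^ q).coeff
      ⟨(a :: l1).formPerm * (w :: l2).formPerm, bl C ⊔ bl B⟩ =
    (q.factorial : ℚ) * (Nb.factorial : ℚ) * (Nc.factorial : ℚ) * gam Nb (l2.length + 1) *
      qs r Nc l1.length := by
  have ha : a ∈ C := hs1 a (by simp)
  have hw : w ∈ B := hs2 w (by simp)
  rw [split_coeff B C h a ha r q _ _ (fp_orb _ _ hs1) (fp_orb _ _ hs2)]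
  have hz : ∀ m ∈ range (q + 1), m ≠ q - (2 * Nb + l2.length) ∨ q < 2 * Nb + l2.length →
      (q.choose m : ℚ) *
      (L (star a C) ^ r * L (sw (C.erase a)) ^ m).coeff ⟨(a :: l1).formPerm, bl C⟩ *
      (L (sw B) ^ (q - m)).coeff ⟨(w :: l2).formPerm, bl B⟩ = 0 := by
    intro m hmq hne
    rw [mem_range] at hmq
    by_contra h0
    have h3 := right_ne_zero_of_mul h0
    have h4 := right_ne_zero_of_mul (left_ne_zero_of_mul h0)
    have h5 := Eu_word _ _ (star_swap a C) (sw_swap (C.erase a)) r m _ h4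
    have h6 := Eu_word _ _ (sw_swap B) (sw_swap B) 0 (q - m) ⟨(w :: l2).formPerm, bl B⟩
      (by rwa [pow_zero, one_mul])
    have h7 := Eu_bound _ _ _ _ ⟨a, ha⟩ h5 (fp_ell a l1)
    have h8 := Eu_bound _ _ _ _ ⟨w, hw⟩ h6 (fp_ell w l2)
    omega
  by_cases hq : 2 * Nb + l2.length ≤ q
  · obtain ⟨m0, rfl⟩ := Nat.exists_eq_add_of_le' hq
    rw [Finset.sum_eq_single m0 (fun m hm1 hm2 => hz m hm1 (Or.inl (by omega)))
      (fun hh => absurd (mem_range.2 (by omega)) hh)]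
    rw [hC a l1 h1 hs1 m0 Nc (by omega) hc, hB w l2 h2 hs2 _ Nb (by omega) hb]
    have := Nat.choose_mul_factorial_mul_factorial (show m0 ≤ m0 + (2 * Nb + l2.length) by omega)
    rw [← this]
    push_cast
    ring
  · rw [Finset.sum_eq_zero fun m hm1 => hz m hm1 (Or.inr (by omega)), qs_vanish _ _ _ (by omega),
      mul_zero]

lemma Qzero (A : Finset α) : QQ 0 A := by
  intro a l hl hA q N hq hN
  have ha : a ∈ A := hA a (by simp)
  rw [pow_zero, one_mul, qs]
  split_ifs with h0
  · obtain ⟨rfl, hl0⟩ := h0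
    rw [List.length_eq_zero_iff] at hl0
    subst hl0
    have hA1 : A = {a} := by
      obtain ⟨b, hb⟩ := Finset.card_eq_one.1 (show A.card = 1 by simpa using hN.symm)
      rw [hb] at ha ⊢
      rw [mem_singleton] at ha
      rw [ha]
    have hq0 : q = 0 := by simpa using hq
    subst hq0
    have : (⟨[a].formPerm, bl A⟩ : St α) = 1 := by
      refine St.ext ?_ ?_
      · simp [one_perm]
      · rw [one_rel, eq_bot_iff, bl_le]
        intro x hx y hy
        rw [hA1, mem_singleton] at hx hy
        rw [hx, hy]
    rw [this, pow_zero, MonoidAlgebra.one_def, MonoidAlgebra.coeff_single]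
    simp
  · rw [mul_zero]
    by_contra hne
    have h2 := Gb_word (A.erase a) (sw (A.erase a)) (sw (A.erase a)) (fun _ h => h) (fun _ h => h) 0 q
      ⟨(a :: l).formPerm, bl A⟩ (by rwa [pow_zero, one_mul])
    have hc : 1 < A.card := by
      rcases Nat.eq_zero_or_pos N with h | h
      · have : l.length ≠ 0 := fun h' => h0 ⟨h, h'⟩
        omega
      · omega
    obtain ⟨b, hb, hba⟩ := Finset.exists_mem_ne hc a
    have h3 : bl (A.erase a) a b := h2.2 (Or.inr ⟨ha, hb⟩)
    rcases h3 with h3 | h3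
    · exact hba h3.symm
    · simpa using h3.1

end comb
end Hz

namespace Hz
set_option linter.unusedSectionVars false
open Finset
section comb
variable {α : Type*} [DecidableEq α] [Fintype α]

lemma Qout (r : ℕ) (A : Finset α) (hQ : QQ r A) (a w : α) (l : List α) (hl : (a :: l).Nodup)
    (hA : ∀ x ∈ a :: l, x ∈ A) (hwA : w ∈ A) (hw : w ∉ a :: l) (q N : ℕ)
    (hq : r + 1 + q = 2 * (N + 1) + l.length) (hN : N + 1 + l.length + 1 = A.card) :
    (MonoidAlgebra.single (lt (swap a w)) 1 * (L (star a A) ^ r * L (sw (A.erase a)) ^ q)).coeff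
      ⟨(a :: l).formPerm, bl A⟩ =
      (q.factorial : ℚ) * (N.factorial : ℚ) * qs r N (l.length + 1) := by
  have ha : a ∈ A := hA a (by simp)
  have hwa : w ≠ a := fun h => hw (by simp [h])
  have hG := Gb_word A _ _ (star_sub a A ha) (erase_sub a A ha) r q
  have hnd : (a :: (l ++ [w])).Nodup := by
    rw [← List.cons_append, List.nodup_append]
    refine ⟨hl, by simp, ?_⟩
    intro x hx y hy hxy
    rw [List.mem_singleton] at hy
    exact hw (by rw [← hy, ← hxy]; exact hx)
  rw [peel A a w ha hwA hwa _ hG, fp_out a w l hl hw, Finset.sum_eq_zero, add_zero]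
  · have := hQ a (l ++ [w]) hnd ?_ q N ?_ ?_
    · rw [this]; simp
    · intro x hx
      simp only [List.mem_cons, List.mem_append, List.not_mem_nil, or_false] at hx
      rcases hx with rfl | hx | rfl
      · exact ha
      · exact hA x (by simp [hx])
      · exact hwA
    · simp; omega
    · simp; omega
  · intro B hB
    by_contra h0
    have h1 := (hG _ h0).1
    rw [mem_filter, mem_powerset] at hB
    have h2 : (bl (A \ B) ⊔ bl B) w (swap a w ((a :: l).formPerm w)) := by
      have := (orb_le _ _).1 h1 w
      rw [← fp_out a w l hl hw] at this
      exact this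
    rw [List.formPerm_apply_of_notMem hw, swap_apply_right, dbl_iff] at h2
    rcases h2 with h2 | h2 | h2
    · exact hwa h2
    · exact (mem_sdiff.1 h2.1).2 hB.2
    · simpa using hB.1 h2.2

lemma Qin (r : ℕ) (A : Finset α) (hQ : ∀ C : Finset α, C.card ≤ A.card → QQ r C)
    (hT : ∀ B : Finset α, B.card < A.card → TT B) (a w : α) (l1 l2 : List α)
    (hl : (a :: (l1 ++ w :: l2)).Nodup)
    (hA : ∀ x ∈ a :: (l1 ++ w :: l2), x ∈ A) (q N : ℕ)
    (hq : r + 1 + q = 2 * N + (l1 ++ w :: l2).length)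
    (hN : N + (l1 ++ w :: l2).length + 1 = A.card) :
    (MonoidAlgebra.single (lt (swap a w)) 1 * (L (star a A) ^ r * L (sw (A.erase a)) ^ q)).coeff
      ⟨(a :: (l1 ++ w :: l2)).formPerm, bl A⟩ =
      (q.factorial : ℚ) * (N.factorial : ℚ) *
        ∑ s ∈ antidiagonal N, gam s.1 (l2.length + 1) * qs r s.2 l1.length := by
  have ha : a ∈ A := hA a (by simp)
  have hwA : w ∈ A := hA w (by simp)
  have hwa : w ≠ a := by rintro rfl; simp at hl
  have hG := Gb_word A _ _ (star_sub a A ha) (erase_sub a A ha) r q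
  have hlen : (l1 ++ w :: l2).length = l1.length + l2.length + 1 := by simp; omega
  rw [hlen] at hq hN
  have hl' := hl
  rw [← List.cons_append, List.nodup_append'] at hl'
  obtain ⟨hn1, hn2, hdis⟩ := hl'
  rw [peel A a w ha hwA hwa _ hG, fp_in a w l1 l2 hl]
  have hz : (L (star a A) ^ r * L (sw (A.erase a)) ^ q).coeff
      ⟨(a :: l1).formPerm * (w :: l2).formPerm, bl A⟩ = 0 := by
    by_contra h0
    have h5 := Eu_word _ _ (star_swap a A) (sw_swap (A.erase a)) r q _ h0
    have h7 := Eu_bound _ _ _ _ ⟨a, ha⟩ h5 (fp_ell2 a w l1 l2)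
    omega
  rw [hz, zero_add]
  set S := (w :: l2).toFinset with hS
  set F := A \ (a :: (l1 ++ w :: l2)).toFinset with hF
  have hScard : S.card = l2.length + 1 := by
    rw [hS, List.toFinset_card_of_nodup hn2]; simp
  have hFcard : F.card = N := by
    rw [hF, Finset.card_sdiff_of_subset, List.toFinset_card_of_nodup hl, List.length_cons, hlen]
    · omega
    · intro x hx; exact hA x (List.mem_toFinset.1 hx)
  have hSmem : ∀ x, x ∈ S ↔ x ∈ w :: l2 := fun x => List.mem_toFinset
  have hFmem : ∀ x, x ∈ F ↔ x ∈ A ∧ x ∉ a :: l1 ∧ x ∉ w :: l2 := by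
    intro x; rw [hF, mem_sdiff, List.mem_toFinset, ← List.cons_append, List.mem_append]; tauto
  have hdis' : ∀ x, x ∈ a :: l1 → x ∈ w :: l2 → False := fun x h h' => hdis h h'
  have hA1 : ∀ x ∈ a :: l1, x ∈ A := fun x hx => hA x (by
    rw [← List.cons_append, List.mem_append]; exact Or.inl hx)
  have hA2 : ∀ x ∈ w :: l2, x ∈ A := fun x hx => hA x (by
    rw [← List.cons_append, List.mem_append]; exact Or.inr hx)
  have hinj : Set.InjOn (fun J : Finset α => J ∪ S) F.powerset := by
    intro J hJ J' hJ' h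
    have key : ∀ J J' : Finset α, J ⊆ F → J ∪ S = J' ∪ S → J ⊆ J' := by
      intro J J' hJ h x hx
      have h1 : x ∈ J' ∪ S := by rw [← h]; exact mem_union_left _ hx
      rcases mem_union.1 h1 with h2 | h2
      · exact h2
      · exact absurd ((hSmem x).1 h2) ((hFmem x).1 (hJ hx)).2.2
    rw [Finset.mem_coe, mem_powerset] at hJ hJ'
    exact Finset.Subset.antisymm (key _ _ hJ h) (key _ _ hJ' h.symm)
  rw [← Finset.sum_subset (s₁ := F.powerset.image (fun J : Finset α => J ∪ S)), Finset.sum_image hinj]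
  · have hval : ∀ J ∈ F.powerset, (L (star a A) ^ r * L (sw (A.erase a)) ^ q).coeff
        ⟨(a :: l1).formPerm * (w :: l2).formPerm, bl (A \ (J ∪ S)) ⊔ bl (J ∪ S)⟩ =
        (fun j : ℕ => (q.factorial : ℚ) * (j.factorial : ℚ) * ((N - j).factorial : ℚ) *
          gam j (l2.length + 1) * qs r (N - j) l1.length) J.card := by
      intro J hJ
      rw [mem_powerset] at hJ
      have hJN : J.card ≤ N := by rw [← hFcard]; exact Finset.card_le_card hJ
      have hBA : J ∪ S ⊆ A := by
        intro x hx
        rcases mem_union.1 hx with h | h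
        · exact ((hFmem x).1 (hJ h)).1
        · exact hA2 x ((hSmem x).1 h)
      have hBc : (J ∪ S).card = J.card + (l2.length + 1) := by
        rw [Finset.card_union_of_disjoint, hScard]
        rw [Finset.disjoint_left]
        intro x hx hx2
        exact ((hFmem x).1 (hJ hx)).2.2 ((hSmem x).1 hx2)
      have hCc : (A \ (J ∪ S)).card = (N - J.card) + l1.length + 1 := by
        rw [Finset.card_sdiff_of_subset hBA, hBc]; omega
      have := splitval (J ∪ S) (A \ (J ∪ S)) Finset.sdiff_disjoint r q J.card (N - J.card)
        (hT _ (by rw [hBc]; omega)) (hQ _ (by omega)) a w l1 l2 hn1 hn2 ?_ ?_ (by omega) (by omega) (by omega)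
      · rw [Finset.sdiff_union_of_subset hBA] at this
        exact this
      · intro x hx
        rw [mem_sdiff, mem_union, hSmem]
        refine ⟨hA1 x hx, ?_⟩
        rintro (h | h)
        · exact ((hFmem x).1 (hJ h)).2.1 hx
        · exact hdis' x hx h
      · intro x hx
        exact mem_union_right _ ((hSmem x).2 hx)
    refine (Finset.sum_congr rfl hval).trans ((Finset.sum_powerset_apply_card (fun j : ℕ =>
      (q.factorial : ℚ) * (j.factorial : ℚ) * ((N - j).factorial : ℚ) *
          gam j (l2.length + 1) * qs r (N - j) l1.length)).trans ?_)
    rw [hFcard,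
      Finset.Nat.sum_antidiagonal_eq_sum_range_succ_mk, Finset.mul_sum]
    refine Finset.sum_congr rfl fun j hj => ?_
    rw [mem_range] at hj
    have := Nat.choose_mul_factorial_mul_factorial (show j ≤ N by omega)
    rw [← this, nsmul_eq_mul]
    push_cast
    ring
  · intro B hB
    obtain ⟨J, hJ, rfl⟩ := mem_image.1 hB
    rw [mem_powerset] at hJ
    rw [mem_filter, mem_powerset]
    refine ⟨?_, mem_union_right _ ((hSmem w).2 (by simp))⟩
    intro x hx
    rw [mem_erase]
    rcases mem_union.1 hx with h | h
    · have := (hFmem x).1 (hJ h)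
      exact ⟨fun h => this.2.1 (by simp [h]), this.1⟩
    · have := (hSmem x).1 h
      exact ⟨fun h => hdis' x (by simp [h]) this, hA2 x this⟩
  · intro B hB hB2
    by_contra h0
    apply hB2
    rw [mem_filter, mem_powerset] at hB
    have h1 := (orb_le _ _).1 (hG _ h0).1
    have haB : a ∉ B := fun h => by simpa using hB.1 h
    have hE1 : ∀ x ∈ a :: l1, (bl (A \ B) ⊔ bl B) a x := by
      refine fp_rel a l1 hn1 _ fun x hx => ?_
      have h2 := h1 x
      simp only [Perm.mul_apply] at h2
      rwa [List.formPerm_apply_of_notMem (fun h => hdis' x hx h)] at h2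
    have hE2 : ∀ x ∈ w :: l2, (bl (A \ B) ⊔ bl B) w x := by
      refine fp_rel w l2 hn2 _ fun x hx => ?_
      have h2 := h1 x
      simp only [Perm.mul_apply] at h2
      rwa [List.formPerm_apply_of_notMem
        (fun h => hdis' _ h (List.formPerm_apply_mem_of_mem hx))] at h2
    have hB1 : ∀ x ∈ a :: l1, x ∉ B := by
      intro x hx hxB
      rcases (dbl_iff _ _ _ _).1 (hE1 x hx) with rfl | h | h
      · exact haB hxB
      · exact (mem_sdiff.1 h.2).2 hxB
      · exact haB h.1
    have hB3 : ∀ x ∈ w :: l2, x ∈ B := by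
      intro x hx
      rcases (dbl_iff _ _ _ _).1 (hE2 x hx) with rfl | h | h
      · exact hB.2
      · exact absurd hB.2 (mem_sdiff.1 h.1).2
      · exact h.2
    refine mem_image.2 ⟨B ∩ F, mem_powerset.2 inter_subset_right, ?_⟩
    ext x
    rw [mem_union, mem_inter, hFmem, hSmem]
    constructor
    · rintro (h | h)
      · exact h.1
      · exact hB3 x h
    · intro h
      by_cases hx : x ∈ w :: l2
      · exact Or.inr hx
      · exact Or.inl ⟨h, mem_of_mem_erase (hB.1 h), fun h' => hB1 x h' h, hx⟩

lemma list_sum (l : List α) (hl : l.Nodup) (f : α → ℚ) (g : ℕ → ℕ → ℚ)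
    (h : ∀ l1 w l2, l = l1 ++ w :: l2 → f w = g l1.length l2.length) :
    ∑ w ∈ l.toFinset, f w = ∑ i ∈ range l.length, g i (l.length - 1 - i) := by
  rw [List.sum_toFinset f hl, ← Fin.sum_univ_fun_getElem, Finset.sum_range]
  refine Finset.sum_congr rfl fun i _ => ?_
  have := h (l.take i) l[i] (l.drop (i + 1)) (by simp)
  refine this.trans ?_
  have hi := i.2
  congr 1
  · simp
  · simp; omega

lemma Qsucc (r : ℕ) (A : Finset α) (hQ : ∀ C : Finset α, C.card ≤ A.card → QQ r C)
    (hT : ∀ B : Finset α, B.card < A.card → TT B) : QQ (r + 1) A := by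
  intro a l hl hA q N hq hN
  have ha : a ∈ A := hA a (by simp)
  have hal : a ∉ l := (List.nodup_cons.1 hl).1
  have hln : l.Nodup := (List.nodup_cons.1 hl).2
  have hL : L (star a A) = ∑ w ∈ A.erase a, MonoidAlgebra.single (lt (swap a w)) 1 := by
    rw [L, sum_star]
  rw [pow_succ', mul_assoc]
  nth_rewrite 1 [hL]
  rw [Finset.sum_mul, MonoidAlgebra.coeff_sum,
    Finsupp.finsetSum_apply]
  change ∑ w ∈ A.erase a, (MonoidAlgebra.single (lt (swap a w)) 1 *
    (L (star a A) ^ r * L (sw (A.erase a)) ^ q)).coeff ⟨(a :: l).formPerm, bl A⟩ = _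
  set f : α → ℚ := fun w => (MonoidAlgebra.single (lt (swap a w)) 1 *
    (L (star a A) ^ r * L (sw (A.erase a)) ^ q)).coeff ⟨(a :: l).formPerm, bl A⟩ with hf
  have hsub : l.toFinset ⊆ A.erase a := by
    intro x hx
    rw [List.mem_toFinset] at hx
    exact mem_erase.2 ⟨fun h => hal (h ▸ hx), hA x (by simp [hx])⟩
  rw [← Finset.sum_sdiff hsub]
  have hin : ∑ w ∈ l.toFinset, f w = (q.factorial : ℚ) * (N.factorial : ℚ) *
      ∑ p ∈ antidiagonal l.length, ∑ s ∈ antidiagonal N, gam s.1 p.1 * qs r s.2 p.2 := by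
    rw [list_sum l hln f (fun i j => (q.factorial : ℚ) * (N.factorial : ℚ) *
        ∑ s ∈ antidiagonal N, gam s.1 (j + 1) * qs r s.2 i)]
    · rw [← Finset.Nat.sum_antidiagonal_swap, Finset.Nat.sum_antidiagonal_eq_sum_range_succ_mk,
        Finset.sum_range_succ]
      simp only [Prod.swap, Nat.sub_self, gam_zero, zero_mul, Finset.sum_const_zero, add_zero]
      rw [Finset.mul_sum]
      refine Finset.sum_congr rfl fun i hi => ?_
      rw [mem_range] at hi
      rw [show l.length - 1 - i + 1 = l.length - i by omega]
    · intro l1 w l2 h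
      subst h
      exact Qin r A hQ hT a w l1 l2 hl hA q N hq hN
  have hcard : (A.erase a \ l.toFinset).card = N := by
    rw [Finset.card_sdiff_of_subset hsub, Finset.card_erase_of_mem ha,
      List.toFinset_card_of_nodup hln]
    omega
  rw [hin, qs]
  cases N with
  | zero =>
    rw [Finset.card_eq_zero.1 hcard, Finset.sum_empty, if_pos rfl]
    ring
  | succ N =>
    have hout : ∀ w ∈ A.erase a \ l.toFinset, f w =
        (q.factorial : ℚ) * (N.factorial : ℚ) * qs r N (l.length + 1) := by
      intro w hw
      rw [mem_sdiff, mem_erase, List.mem_toFinset] at hw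
      exact Qout r A (hQ A le_rfl) a w l hl hA hw.1.2 (by simp [hw.1.1, hw.2]) q N hq hN
    rw [Finset.sum_congr rfl hout, Finset.sum_const, hcard, if_neg (Nat.succ_ne_zero N),
      Nat.factorial_succ, nsmul_eq_mul, Nat.add_sub_cancel]
    push_cast
    ring

lemma Qall (n : ℕ) (hT : ∀ B : Finset α, B.card < n → TT B) (r : ℕ) :
    ∀ A : Finset α, A.card ≤ n → QQ r A := by
  induction r with
  | zero => exact fun A _ => Qzero A
  | succ r ih =>
    intro A hA
    exact Qsucc r A (fun C hC => ih C (hC.trans hA)) (fun B hB => hT B (hB.trans_le hA))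

lemma Tall (n : ℕ) : ∀ A : Finset α, A.card = n → TT A := by
  induction n using Nat.strong_induction_on with
  | _ n ih =>
  intro A hAn a l hl hA m N hm hN
  have ha : a ∈ A := hA a (by simp)
  have hQ := fun r => Qall n (fun B hB => ih _ hB B rfl) r A hAn.le
  rw [L_sw a A ha, (star_commute a A).add_pow, MonoidAlgebra.coeff_sum, Finsupp.finsetSum_apply,
    ← alg_main, Finset.mul_sum, hm]
  refine Finset.sum_congr rfl fun r hr => ?_
  rw [mem_range] at hr
  have e : ∀ q c : ℕ, L (star a A) ^ r * L (sw (A.erase a)) ^ q * (c : Rg α) =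
      (c : ℚ) • (L (star a A) ^ r * L (sw (A.erase a)) ^ q) := by
    intro q c
    rw [← nsmul_eq_mul', ← Nat.cast_smul_eq_nsmul ℚ]
  rw [e, MonoidAlgebra.coeff_smul, Finsupp.smul_apply, smul_eq_mul,
    hQ r a l hl hA _ N (by omega) hN]
  have h1 := Nat.choose_mul_factorial_mul_factorial (show r ≤ 2 * N + l.length by omega)
  have h2 : (r.factorial : ℚ) ≠ 0 := by exact_mod_cast r.factorial_ne_zero
  rw [← h1]
  push_cast
  field_simp

end comb
end Hz

namespace Hz
set_option linter.unusedSectionVars false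
open Finset
section fin

lemma pow_sum {M ι : Type*} [Monoid M] [Fintype ι] (g : ι → M) (m : ℕ) :
    (∑ x : ι, MonoidAlgebra.single (g x) (1 : ℚ)) ^ m =
      ∑ τ : Fin m → ι, MonoidAlgebra.single ((List.ofFn (fun i => g (τ i))).prod) (1 : ℚ) := by
  induction m with
  | zero => simp [MonoidAlgebra.one_def]
  | succ m ih =>
    rw [pow_succ', ih, Finset.sum_mul_sum, ← Finset.sum_product', Finset.univ_product_univ,
      ← (Fin.consEquiv (fun _ => ι)).sum_comp]
    refine Finset.sum_congr rfl fun p _ => ?_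
    rw [MonoidAlgebra.single_mul_single, one_mul]
    simp [Fin.consEquiv, List.ofFn_succ]

lemma coeff_count {M ι : Type*} [Monoid M] [Fintype ι] (g : ι → M) (m : ℕ) (s : M) :
    ((∑ x : ι, MonoidAlgebra.single (g x) (1 : ℚ)) ^ m).coeff s =
      (Nat.card {τ : Fin m → ι // (List.ofFn (fun i => g (τ i))).prod = s} : ℚ) := by
  classical
  rw [pow_sum, MonoidAlgebra.coeff_sum, Finsupp.finsetSum_apply, Nat.card_eq_fintype_card,
    Fintype.card_subtype]
  simp only [MonoidAlgebra.coeff_single, Finsupp.single_apply]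
  rw [Finset.sum_boole]

variable {α : Type*} [DecidableEq α]

lemma prod_perm (l : List (Perm α)) : ((l.map lt).prod : St α).perm = l.prod := by
  induction l with
  | nil => rfl
  | cons a l ih => rw [List.map_cons, List.prod_cons, mul_perm, ih, List.prod_cons]; rfl

lemma prod_rel (l : List (Perm α)) (E : Setoid α) :
    ((l.map lt).prod : St α).rel ≤ E ↔ ∀ τ ∈ l, orb τ ≤ E := by
  induction l with
  | nil => simp [one_rel]
  | cons a l ih =>
    rw [List.map_cons, List.prod_cons, mul_rel, sup_le_iff, ih, List.forall_mem_cons]; rfl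

lemma trans_iff [Fintype α] {m : ℕ} (τ : Fin m → Perm α) :
    (((List.ofFn τ).map lt).prod : St α).rel = bl Finset.univ ↔
      ∀ x y : α, ∃ g ∈ Subgroup.closure (Set.range τ), g x = y := by
  constructor
  · intro h
    let E : Setoid α :=
      { r := fun x y => ∃ g ∈ Subgroup.closure (Set.range τ), g x = y
        iseqv := by
          refine ⟨fun x => ⟨1, one_mem _, rfl⟩, ?_, ?_⟩
          · rintro x y ⟨g, hg, rfl⟩
            exact ⟨g⁻¹, inv_mem hg, by simp⟩
          · rintro x y z ⟨g, hg, rfl⟩ ⟨g', hg', rfl⟩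
            exact ⟨g' * g, mul_mem hg' hg, rfl⟩ }
    have h1 : bl Finset.univ ≤ E := by
      rw [← h, prod_rel]
      intro σ hσ
      rw [List.mem_ofFn] at hσ
      obtain ⟨i, rfl⟩ := hσ
      rw [orb_le]
      intro x
      exact ⟨τ i, Subgroup.subset_closure ⟨i, rfl⟩, rfl⟩
    intro x y
    exact h1 (Or.inr ⟨mem_univ _, mem_univ _⟩)
  · intro h
    set R := (((List.ofFn τ).map lt).prod : St α).rel with hR
    have h1 : ∀ g ∈ Subgroup.closure (Set.range τ), ∀ x, R x (g x) := by
      intro g hg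
      induction hg using Subgroup.closure_induction with
      | mem g hg =>
        obtain ⟨i, rfl⟩ := hg
        exact (orb_le _ _).1 ((prod_rel (List.ofFn τ) R).1 le_rfl (τ i) (List.mem_ofFn.2 ⟨i, rfl⟩))
      | one => exact fun x => R.refl _
      | mul g g' _ _ h1 h2 => exact fun x => R.trans (h2 x) (h1 (g' x))
      | inv g _ h1 =>
        intro x
        have := h1 (g⁻¹ x)
        rw [← Perm.mul_apply, mul_inv_cancel, Perm.one_apply] at this
        exact R.symm this
    apply le_antisymm
    · intro x y _
      exact Or.inr ⟨mem_univ _, mem_univ _⟩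
    · rw [bl_le]
      intro x _ y _
      obtain ⟨g, hg, rfl⟩ := h x y
      exact h1 g hg x

end fin
end Hz

/-- The number of (2n-2)-tuples of transpositions of {1,...,n} whose product is the
identity and which generate a transitive subgroup equals n^(n-3) * (2n-2)!. -/
theorem hurwitz_number_simple (n : ℕ) (hn : 2 ≤ n) :
    (Nat.card {τ : Fin (2 * n - 2) → Perm (Fin n) //
        (∀ i, (τ i).IsSwap) ∧
        (List.ofFn τ).prod = 1 ∧
        (∀ x y : Fin n, ∃ g ∈ Subgroup.closure (Set.range τ), g x = y)} : ℚ) =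
      (n : ℚ) ^ ((n : ℤ) - 3) * ((2 * n - 2).factorial : ℚ) := by
  obtain ⟨k, rfl⟩ : ∃ k, n = k + 2 := ⟨n - 2, by omega⟩
  have hT := Hz.Tall (α := Fin (k + 2)) (k + 2) Finset.univ (by simp) 0 [] (by simp) (by simp)
    (2 * (k + 2) - 2) (k + 1) (by simp; omega) (by simp)
  have hL : Hz.L (Hz.sw (Finset.univ : Finset (Fin (k + 2)))) =
      ∑ x : {τ : Perm (Fin (k + 2)) // τ ∈ Hz.sw (Finset.univ : Finset (Fin (k + 2)))},
        MonoidAlgebra.single (Hz.lt x.1) (1 : ℚ) := by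
    rw [Hz.L, ← Finset.sum_coe_sort]
  rw [hL, Hz.coeff_count] at hT
  have hc : Nat.card {τ : Fin (2 * (k + 2) - 2) → Perm (Fin (k + 2)) //
        (∀ i, (τ i).IsSwap) ∧
        (List.ofFn τ).prod = 1 ∧
        (∀ x y : Fin (k + 2), ∃ g ∈ Subgroup.closure (Set.range τ), g x = y)} =
      Nat.card {τ : Fin (2 * (k + 2) - 2) →
          {τ : Perm (Fin (k + 2)) // τ ∈ Hz.sw (Finset.univ : Finset (Fin (k + 2)))} //
        (List.ofFn (fun i => Hz.lt (τ i).1)).prod =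
          ⟨[(0 : Fin (k + 2))].formPerm, Hz.bl Finset.univ⟩} := by
    have key : ∀ τ : Fin (2 * (k + 2) - 2) → Perm (Fin (k + 2)),
        (List.ofFn (fun i => Hz.lt (τ i))).prod =
          ⟨[(0 : Fin (k + 2))].formPerm, Hz.bl Finset.univ⟩ ↔ ((List.ofFn τ).prod = 1 ∧
        (∀ x y : Fin (k + 2), ∃ g ∈ Subgroup.closure (Set.range τ), g x = y)) := by
      intro τ
      have e : List.ofFn (fun i => Hz.lt (τ i)) = (List.ofFn τ).map Hz.lt := by
        rw [List.map_ofFn]; rfl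
      rw [e, Hz.St.ext_iff, Hz.trans_iff, Hz.prod_perm, List.formPerm_singleton]
    refine Nat.card_congr
      { toFun := fun τ => ⟨fun i => ⟨τ.1 i, (Hz.mem_sw _ _).2 ⟨τ.2.1 i, fun x _ => Finset.mem_univ x⟩⟩,
          (key τ.1).2 τ.2.2⟩
        invFun := fun τ => ⟨fun i => (τ.1 i).1, fun i => ((Hz.mem_sw _ _).1 (τ.1 i).2).1,
          (key _).1 τ.2⟩
        left_inv := fun τ => rfl
        right_inv := fun τ => rfl }
  rw [hc, hT, Hz.gam]
  have h0 : (((k + 2 : ℕ) : ℚ)) ≠ 0 := by positivity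
  have h1 : (((k + 1).factorial : ℕ) : ℚ) ≠ 0 := by positivity
  have h2 : ((k + 2 : ℕ) : ℚ) ^ (((k + 2 : ℕ) : ℤ) - 3) =
      ((k + 2 : ℕ) : ℚ) ^ (k + 1) / ((k + 2 : ℕ) : ℚ) ^ 2 := by
    rw [← zpow_natCast, ← zpow_natCast, ← zpow_sub₀ h0]
    congr 1
    push_cast
    ring
  rw [h2]
  simp only [List.length_nil, zero_add, Nat.add_assoc]
  norm_num [Nat.add_assoc]
  field_simp
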